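/- arXiv:2206.10217 — 3 statements merged into one kernel-verified Lean document; each statement's English description precedes it below -/
import Mathlib

section
/- In the pure p-spin spherical model with p ≥ 3, for every fixed integer k ≥ 0 and every ε > 0 there exists a constant cₖ > 0 such that for all sufficiently large N, P( there exists a spherical critical point σ of H_N with index equal to N−1−k and H_N(σ) ≤ N (THR − ε) ) ≤ exp(−cₖ N), where THR = 2√((p−1)/p). -/
open MeasureTheory ProbabilityTheory Filter
open scoped ENNReal NNReal

noncomputable section

/-- Euclidean dot product on `ℝ^N`. -/
def dotp {N : ℕ} (σ τ : Fin N → ℝ) : ℝ := ∑ i, σ i * τ i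

/-- The sphere `S_N = {σ : ‖σ‖₂² = N}`. -/
def sphereSet (N : ℕ) : Set (Fin N → ℝ) := {σ | ∑ i, (σ i) ^ 2 = (N : ℝ)}

/-- The mixture `ξ(x) = Σ_{k=2}^P c_k² x^k`. -/
def xiFun (P : ℕ) (c : ℕ → ℝ) (x : ℝ) : ℝ := ∑ k ∈ Finset.Icc 2 P, (c k) ^ 2 * x ^ k

/-- `ξ'`. -/
def xiD1 (P : ℕ) (c : ℕ → ℝ) (x : ℝ) : ℝ :=
  ∑ k ∈ Finset.Icc 2 P, (k : ℝ) * (c k) ^ 2 * x ^ (k - 1)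

/-- `ξ''`. -/
def xiD2 (P : ℕ) (c : ℕ → ℝ) (x : ℝ) : ℝ :=
  ∑ k ∈ Finset.Icc 2 P, (k : ℝ) * ((k : ℝ) - 1) * (c k) ^ 2 * x ^ (k - 2)

/-- The mixed p-spin Hamiltonian built from couplings `g`. -/
def hamiltonian (N P : ℕ) (c : ℕ → ℝ) (g : (k : ℕ) → (Fin k → Fin N) → ℝ)
    (σ : Fin N → ℝ) : ℝ :=
  ∑ k ∈ Finset.Icc 2 P, c k * (N : ℝ) ^ (-(((k : ℝ) - 1) / 2)) *
    ∑ j : Fin k → Fin N, g k j * ∏ i, σ (j i)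

/-- Index set for the entries of all the coupling tensors. -/
abbrev GIdx (N P : ℕ) : Type := Σ k : {k : ℕ // k ∈ Finset.Icc 2 P}, (Fin (k : ℕ) → Fin N)

/-- Flatten the couplings into a single Gaussian vector. -/
def flatten (N P : ℕ) (g : (k : ℕ) → (Fin k → Fin N) → ℝ) : GIdx N P → ℝ :=
  fun i => g i.1 i.2

/-- The couplings `(G^{(k)})_{2 ≤ k ≤ P}` are i.i.d. standard Gaussians. -/
def StdGaussianCouplings {Ω : Type*} [MeasureSpace Ω] (N P : ℕ)
    (G : Ω → (k : ℕ) → (Fin k → Fin N) → ℝ) : Prop :=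
  Measure.map (fun ω => flatten N P (G ω)) ℙ = Measure.pi fun _ : GIdx N P => gaussianReal 0 1

/-- The maximum of the Hamiltonian over the sphere. -/
def maxH (N P : ℕ) (c : ℕ → ℝ) (g : (k : ℕ) → (Fin k → Fin N) → ℝ) : ℝ :=
  ⨆ σ : sphereSet N, hamiltonian N P c g σ.1


/-- Euclidean gradient of the Hamiltonian. -/
def gradH (N P : ℕ) (c : ℕ → ℝ) (g : (k : ℕ) → (Fin k → Fin N) → ℝ)
    (σ : Fin N → ℝ) : Fin N → ℝ :=
  fun i => fderiv ℝ (hamiltonian N P c g) σ (Pi.single i 1)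

/-- Euclidean Hessian of the Hamiltonian, as a bilinear form. -/
def hessH (N P : ℕ) (c : ℕ → ℝ) (g : (k : ℕ) → (Fin k → Fin N) → ℝ)
    (σ v w : Fin N → ℝ) : ℝ :=
  fderiv ℝ (fun τ => fderiv ℝ (hamiltonian N P c g) τ w) σ v

/-- `σ` is a spherical critical point: `∇H(σ) = (⟨∇H(σ),σ⟩/N) σ`. -/
def IsCritPt (N P : ℕ) (c : ℕ → ℝ) (g : (k : ℕ) → (Fin k → Fin N) → ℝ)
    (σ : Fin N → ℝ) : Prop :=
  σ ∈ sphereSet N ∧ gradH N P c g σ = (dotp (gradH N P c g σ) σ / N) • σ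

/-- Cardinality of a set, valued in `ℝ≥0∞`. -/
def ecount {α : Type*} (s : Set α) : ℝ≥0∞ := ∑' _ : s, 1

/-- Spherical critical points with energy at least `Nη`. -/
def crtSet (N P : ℕ) (c : ℕ → ℝ) (g : (k : ℕ) → (Fin k → Fin N) → ℝ)
    (η : ℝ) : Set (Fin N → ℝ) :=
  {σ | IsCritPt N P c g σ ∧ (N : ℝ) * η ≤ hamiltonian N P c g σ}

/-- Index (number of negative eigenvalues) of the spherical Hessian quadratic form at `σ`:
maximal dimension of a subspace of the tangent space on which the form is negative definite. -/
def critIndex (N P : ℕ) (c : ℕ → ℝ) (g : (k : ℕ) → (Fin k → Fin N) → ℝ)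
    (σ : Fin N → ℝ) : ℕ :=
  sSup {d : ℕ | ∃ W : Submodule ℝ (Fin N → ℝ), Module.finrank ℝ W = d ∧
    (∀ v ∈ W, dotp v σ = 0) ∧
    ∀ v ∈ W, v ≠ 0 →
      hessH N P c g σ v v - (dotp (gradH N P c g σ) σ / N) * ∑ i, (v i) ^ 2 < 0}

/-- Critical points of index `N-1-k` in the superlevel set. -/
def crtSetIdx (N P : ℕ) (c : ℕ → ℝ) (g : (k : ℕ) → (Fin k → Fin N) → ℝ)
    (η : ℝ) (k : ℕ) : Set (Fin N → ℝ) :=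
  {σ | σ ∈ crtSet N P c g η ∧ critIndex N P c g σ = N - 1 - k}

/-- Coefficients of the pure p-spin model. -/
def pureC (p : ℕ) : ℕ → ℝ := fun k => if k = p then 1 else 0

/-- The uniform probability measure on the sphere `S_N`. -/
def sphereUniform (N : ℕ) : Measure (Fin N → ℝ) :=
  Measure.map (fun g i => Real.sqrt N * g i / Real.sqrt (∑ j, (g j) ^ 2))
    (Measure.pi fun _ : Fin N => gaussianReal 0 1)

/-- The band around `m`. -/
def band (N : ℕ) (m : Fin N → ℝ) (δ : ℝ) : Set (Fin N → ℝ) :=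
  {σ | σ ∈ sphereSet N ∧ |dotp (σ - m) m| < N * δ}

/-- `k`-tuples from the band with pairwise overlaps close to `⟨m,m⟩`. -/
def bandK (N k : ℕ) (m : Fin N → ℝ) (δ ε : ℝ) : Set (Fin k → Fin N → ℝ) :=
  {σs | (∀ i, σs i ∈ band N m δ) ∧
    ∀ i j, i ≠ j → |dotp (σs i) (σs j) - dotp m m| < N * ε}

/-- `∫₀ᵗ γ(s) ds`, valued in `ℝ≥0∞`. -/
def gammaLInt (γ : ℝ → ℝ) (t : ℝ) : ℝ≥0∞ := ∫⁻ s in Set.Ioo 0 t, ENNReal.ofReal (γ s)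

/-- The zero-temperature spherical Parisi functional (Crisanti–Sommers form), with the
convention `1/0 = +∞`. -/
def PFunE (P : ℕ) (c : ℕ → ℝ) (γ : ℝ → ℝ) : ℝ≥0∞ :=
  ⨅ L ∈ {L : ℝ | gammaLInt γ 1 ≤ ENNReal.ofReal L},
    (∫⁻ t in Set.Ioo (0 : ℝ) 1,
      (ENNReal.ofReal (xiD2 P c t * (L - (gammaLInt γ t).toReal))
        + (ENNReal.ofReal (L - (gammaLInt γ t).toReal))⁻¹)) / 2

/-- The space `𝒰` of order parameters: non-decreasing, non-negative, integrable on `[0,1)`. -/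
def calU : Set (ℝ → ℝ) :=
  {γ | (∀ t ∈ Set.Ico (0 : ℝ) 1, 0 ≤ γ t) ∧ MonotoneOn γ (Set.Ico 0 1) ∧
    IntegrableOn γ (Set.Ioo 0 1)}

/-- The support of `γ`: points of `[0,1]` near which `γ` is not constant. -/
def suppGamma (γ : ℝ → ℝ) : Set ℝ :=
  {q | q ∈ Set.Icc (0 : ℝ) 1 ∧ ∀ ε > 0, ∃ s ∈ Set.Ico (0 : ℝ) 1, ∃ t ∈ Set.Ico (0 : ℝ) 1,
    |s - q| < ε ∧ |t - q| < ε ∧ γ s ≠ γ t}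

/-- The superlevel set `L_N(η)`. -/
def levelSet (N P : ℕ) (c : ℕ → ℝ) (g : (k : ℕ) → (Fin k → Fin N) → ℝ)
    (η : ℝ) : Set (Fin N → ℝ) :=
  {σ | σ ∈ sphereSet N ∧ (N : ℝ) * η ≤ hamiltonian N P c g σ}

/-- Threshold energy of the pure p-spin model. -/
def THRp (p : ℕ) : ℝ := 2 * Real.sqrt (((p : ℝ) - 1) / p)

/-- The function `J` of the pure p-spin complexity. -/
def Jp (p : ℕ) (η : ℝ) : ℝ :=
  η / (THRp p) ^ 2 * Real.sqrt (η ^ 2 - (THRp p) ^ 2)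
    - Real.log (η + Real.sqrt (η ^ 2 - (THRp p) ^ 2)) + Real.log (THRp p)

/-- The annealed complexity of the pure p-spin spherical model. -/
def SigmaPure (p : ℕ) (η : ℝ) : ℝ :=
  if η ≤ 0 then Real.log ((p : ℝ) - 1) / 2
  else if η ≤ THRp p then
    Real.log ((p : ℝ) - 1) / 2 - ((p : ℝ) - 2) / (4 * ((p : ℝ) - 1)) * η ^ 2
  else Real.log ((p : ℝ) - 1) / 2 - ((p : ℝ) - 2) / (4 * ((p : ℝ) - 1)) * η ^ 2 - Jp p η

/-- Couplings, unflattened from a vector indexed by `GIdx N P`. -/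
def unflatten (N P : ℕ) (g : GIdx N P → ℝ) : (k : ℕ) → (Fin k → Fin N) → ℝ :=
  fun k j => if h : k ∈ Finset.Icc 2 P then g ⟨⟨k, h⟩, j⟩ else 0

/-- `ξ'''`. -/
def xiD3 (P : ℕ) (c : ℕ → ℝ) (x : ℝ) : ℝ :=
  ∑ k ∈ Finset.Icc 2 P, (k : ℝ) * ((k : ℝ) - 1) * ((k : ℝ) - 2) * (c k) ^ 2 * x ^ (k - 3)

/-- The law of a vector of i.i.d. standard Gaussians indexed by `ι`. -/
abbrev gaussPi (ι : Type*) [Fintype ι] : Measure (ι → ℝ) :=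
  Measure.pi fun _ : ι => gaussianReal 0 1

/-- Orthonormal linear functionals of a standard Gaussian vector form a standard Gaussian vector. -/
lemma map_gaussPi_of_orthonormal {ι κ : Type*} [Fintype ι] [Fintype κ]
    (c : ι → EuclideanSpace ℝ κ) (hc : Orthonormal ℝ c) :
    (gaussPi κ).map (fun x i => ∑ k, c i k * x k) = gaussPi ι := by
  classical
  have key : ((gaussPi κ).map (fun x i => ∑ k, c i k * x k)).map
      (MeasurableEquiv.toLp 2 (ι → ℝ)) = (gaussPi ι).map (MeasurableEquiv.toLp 2 (ι → ℝ)) := by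
    rw [Measure.map_map (by fun_prop) (by fun_prop)]
    apply Measure.ext_of_charFun (E := EuclideanSpace ℝ ι)
    ext t
    have h1 : charFun ((gaussPi ι).map (MeasurableEquiv.toLp 2 (ι → ℝ)) :
        Measure (EuclideanSpace ℝ ι)) t = Complex.exp (-‖t‖ ^ 2 / 2) := by
      rw [MeasurableEquiv.coe_toLp, map_pi_eq_stdGaussian, charFun_stdGaussian]
    have h2 : charFun ((gaussPi κ).map (WithLp.toLp 2) :
        Measure (EuclideanSpace ℝ κ)) (∑ i, t i • c i) = Complex.exp (-‖t‖ ^ 2 / 2) := by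
      rw [map_pi_eq_stdGaussian, charFun_stdGaussian]
      have : ‖∑ i, t i • c i‖ ^ 2 = ‖t‖ ^ 2 := by
        rw [← real_inner_self_eq_norm_sq, hc.inner_sum, EuclideanSpace.real_norm_sq_eq]
        simp [sq]
      rw [← Complex.ofReal_pow, this, Complex.ofReal_pow]
    rw [h1, ← h2, charFun_apply, charFun_apply, integral_map, integral_map]
    · congr 1
      ext x
      congr 3
      simp only [PiLp.inner_apply, Function.comp]
      simp [Finset.sum_mul, Finset.mul_sum]
      rw [Finset.sum_comm]
      refine Finset.sum_congr rfl fun i _ => Finset.sum_congr rfl fun j _ => by ring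
    · fun_prop
    · exact Measurable.aestronglyMeasurable (by fun_prop)
    · exact (Measurable.comp (MeasurableEquiv.measurable _) (by fun_prop)).aemeasurable
    · exact Measurable.aestronglyMeasurable (by fun_prop)
  have := congrArg (Measure.map (MeasurableEquiv.toLp 2 (ι → ℝ)).symm) key
  simpa only [MeasurableEquiv.map_symm_map] using this

lemma lintegral_exp_neg_mul_gaussianReal (l : ℝ) :
    ∫⁻ x, ENNReal.ofReal (Real.exp (-l * x)) ∂(gaussianReal 0 1)
      = ENNReal.ofReal (Real.exp (l ^ 2 / 2)) := by
  have h := mgf_gaussianReal (p := gaussianReal 0 1) (X := id) (μ := 0) (v := 1) (by simp) (-l)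
  have hi : Integrable (fun x => Real.exp (-l * x)) (gaussianReal 0 1) :=
    integrable_exp_mul_gaussianReal (-l)
  rw [← ofReal_integral_eq_lintegral_ofReal hi (ae_of_all _ fun x => (Real.exp_pos _).le)]
  simp only [mgf, id] at h
  rw [h]
  simp

lemma lintegral_exp_neg_sq_gaussianReal (s : ℝ) (hs : -(1 / 2) < s) :
    ∫⁻ x, ENNReal.ofReal (Real.exp (-s * x ^ 2)) ∂(gaussianReal 0 1)
      = ENNReal.ofReal (√(1 + 2 * s))⁻¹ := by
  rw [gaussianReal_of_var_ne_zero 0 one_ne_zero,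
    lintegral_withDensity_eq_lintegral_mul _ (measurable_gaussianPDF 0 1) (by fun_prop)]
  have h0 : ∀ x : ℝ, (gaussianPDF 0 1 * fun x => ENNReal.ofReal (Real.exp (-s * x ^ 2))) x
      = ENNReal.ofReal ((√(2 * Real.pi))⁻¹ * Real.exp (-(s + 1 / 2) * x ^ 2)) := by
    intro x
    rw [Pi.mul_apply, gaussianPDF, ← ENNReal.ofReal_mul (gaussianPDFReal_nonneg _ _ _),
      gaussianPDFReal]
    congr 1
    simp only [NNReal.coe_one, mul_one, sub_zero]
    rw [mul_assoc, ← Real.exp_add]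
    congr 2
    ring
  rw [lintegral_congr h0, ← ofReal_integral_eq_lintegral_ofReal]
  · rw [integral_const_mul, integral_gaussian]
    congr 1
    rw [← Real.sqrt_inv, ← Real.sqrt_inv, ← Real.sqrt_mul (by positivity)]
    congr 1
    have : s + 1 / 2 ≠ 0 := by linarith
    have h2 : 1 + 2 * s ≠ 0 := by linarith
    field_simp
    rw [add_comm, div_self (by linarith)]
  · exact (integrable_exp_neg_mul_sq (by linarith)).const_mul _
  · exact ae_of_all _ fun x => by positivity

lemma lintegral_exp_neg_sum_sq (ι : Type*) [Fintype ι] (s : ℝ) (hs : -(1 / 2) < s) :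
    ∫⁻ x, ENNReal.ofReal (Real.exp (-s * ∑ i, x i ^ 2)) ∂(gaussPi ι)
      = ENNReal.ofReal ((√(1 + 2 * s))⁻¹ ^ Fintype.card ι) := by
  have h0 : ∀ x : ι → ℝ, ENNReal.ofReal (Real.exp (-s * ∑ i, x i ^ 2))
      = ∏ i, ENNReal.ofReal (Real.exp (-s * x i ^ 2)) := by
    intro x
    rw [Finset.mul_sum, Real.exp_sum, ENNReal.ofReal_prod_of_nonneg]
    exact fun i _ => (Real.exp_pos _).le
  rw [lintegral_congr h0]
  have hind : iIndepFun (fun (i : ι) (x : ι → ℝ) => ENNReal.ofReal (Real.exp (-s * x i ^ 2)))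
      (gaussPi ι) :=
    iIndepFun_pi (μ := fun _ : ι => gaussianReal 0 1)
      (X := fun _ y => ENNReal.ofReal (Real.exp (-s * y ^ 2))) (by fun_prop)
  have := lintegral_prod_eq_prod_lintegral_of_indepFun Finset.univ _ hind (by fun_prop)
  rw [this]
  have h1 : ∀ i : ι, ∫⁻ x : ι → ℝ, ENNReal.ofReal (Real.exp (-s * x i ^ 2)) ∂(gaussPi ι)
      = ENNReal.ofReal (√(1 + 2 * s))⁻¹ := by
    intro i
    rw [← lintegral_exp_neg_sq_gaussianReal s hs,
      ← (measurePreserving_eval (fun _ : ι => gaussianReal 0 1) i).lintegral_comp (by fun_prop)]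
  simp only [h1]
  rw [Finset.prod_const, Finset.card_univ, ENNReal.ofReal_pow (by positivity)]

/-- Laplace transform of the Euclidean norm of a standard Gaussian vector. -/
lemma lintegral_exp_neg_norm_le (d n₀ : ℕ) (hd : n₀ ≤ d) (l r s : ℝ) (hl : 0 ≤ l)
    (hs : 0 ≤ s) :
    ∫⁻ h, ENNReal.ofReal (Real.exp (-l * √(∑ i, h i ^ 2))) ∂(gaussPi (Fin d))
      ≤ ENNReal.ofReal (Real.exp (-l * r) + Real.exp (s * r ^ 2) * (√(1 + 2 * s))⁻¹ ^ n₀) := by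
  have hpt : ∀ h : Fin d → ℝ, ENNReal.ofReal (Real.exp (-l * √(∑ i, h i ^ 2)))
      ≤ ENNReal.ofReal (Real.exp (-l * r)) + ENNReal.ofReal (Real.exp (s * r ^ 2)) *
        ENNReal.ofReal (Real.exp (-s * ∑ i, h i ^ 2)) := by
    intro h
    have hz : 0 ≤ ∑ i, h i ^ 2 := Finset.sum_nonneg fun i _ => sq_nonneg _
    rw [← ENNReal.ofReal_mul (Real.exp_pos _).le, ← Real.exp_add,
      ← ENNReal.ofReal_add (Real.exp_pos _).le (Real.exp_pos _).le]
    apply ENNReal.ofReal_le_ofReal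
    by_cases hc : r ≤ √(∑ i, h i ^ 2)
    · have : Real.exp (-l * √(∑ i, h i ^ 2)) ≤ Real.exp (-l * r) := by
        apply Real.exp_le_exp.2
        nlinarith
      linarith [Real.exp_pos (s * r ^ 2 + -s * ∑ i, h i ^ 2)]
    · push Not at hc
      have h1 : ∑ i, h i ^ 2 ≤ r ^ 2 := by
        rw [← Real.sq_sqrt hz]
        exact pow_le_pow_left₀ (Real.sqrt_nonneg _) hc.le 2
      have h2 : Real.exp (-l * √(∑ i, h i ^ 2)) ≤ 1 := by
        rw [Real.exp_le_one_iff]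
        nlinarith [Real.sqrt_nonneg (∑ i, h i ^ 2)]
      have h3 : 1 ≤ Real.exp (s * r ^ 2 + -s * ∑ i, h i ^ 2) := by
        apply Real.one_le_exp
        nlinarith
      linarith [Real.exp_pos (-l * r)]
  refine (lintegral_mono hpt).trans ?_
  rw [lintegral_add_left (by fun_prop), lintegral_const_mul _ (by fun_prop),
    lintegral_exp_neg_sum_sq _ s (by linarith), lintegral_const, measure_univ, mul_one,
    ← ENNReal.ofReal_mul (Real.exp_pos _).le,
      ← ENNReal.ofReal_add (Real.exp_pos _).le (by positivity), Fintype.card_fin]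
  apply ENNReal.ofReal_le_ofReal
  refine add_le_add le_rfl (mul_le_mul_of_nonneg_left ?_ (Real.exp_pos _).le)
  refine pow_le_pow_of_le_one (by positivity) ?_ hd
  refine inv_le_one_of_one_le₀ ?_
  rw [Real.one_le_sqrt]
  linarith

/-- The quadratic form `x ↦ ⟨x, M x⟩` of a square matrix. -/
def quadForm {n : ℕ} (M : Fin n × Fin n → ℝ) (x : EuclideanSpace ℝ (Fin n)) : ℝ :=
  ∑ q, x q.1 * x q.2 * M q

/-- The rank-one matrix `x ⊗ y`. -/
def outer {n : ℕ} (x y : EuclideanSpace ℝ (Fin n)) : EuclideanSpace ℝ (Fin n × Fin n) :=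
  WithLp.toLp 2 fun q => x q.1 * y q.2

lemma outer_apply {n : ℕ} (x y : EuclideanSpace ℝ (Fin n)) (q : Fin n × Fin n) :
    outer x y q = x q.1 * y q.2 := rfl

lemma inner_outer {n : ℕ} (x y x' y' : EuclideanSpace ℝ (Fin n)) :
    inner ℝ (outer x y) (outer x' y') = inner ℝ x x' * inner ℝ y y' := by
  simp only [PiLp.inner_apply, outer, Fintype.sum_prod_type, Finset.sum_mul_sum]
  refine Finset.sum_congr rfl fun i _ => Finset.sum_congr rfl fun j _ => ?_
  simp
  ring

/-- The orthonormal matrices adapted to a basis whose first vector is singled out. -/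
def adaptedFamily {n : ℕ} (b : Fin (n + 1) → EuclideanSpace ℝ (Fin (n + 1))) :
    (Unit ⊕ Fin n) ⊕ (Fin n × Fin n) → EuclideanSpace ℝ (Fin (n + 1) × Fin (n + 1))
  | .inl (.inl _) => outer (b 0) (b 0)
  | .inl (.inr j) => (√2)⁻¹ • (outer (b 0) (b j.succ) + outer (b j.succ) (b 0))
  | .inr q => outer (b q.1.succ) (b q.2.succ)

lemma orthonormal_adaptedFamily {n : ℕ} (b : Fin (n + 1) → EuclideanSpace ℝ (Fin (n + 1)))
    (hb : Orthonormal ℝ b) : Orthonormal ℝ (adaptedFamily b) := by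
  classical
  have hb' := orthonormal_iff_ite.1 hb
  have h2 : (√2)⁻¹ * ((√2)⁻¹ * 2) = (1 : ℝ) := by
    rw [← mul_assoc, ← mul_inv, Real.mul_self_sqrt (by norm_num)]; norm_num
  rw [orthonormal_iff_ite]
  rintro ((⟨⟩ | j) | ⟨i, j⟩) ((⟨⟩ | j') | ⟨i', j'⟩) <;>
    simp only [adaptedFamily, inner_smul_left, inner_smul_right, inner_add_left, inner_add_right,
      inner_outer, hb'] <;> simp [Fin.succ_ne_zero, (Fin.succ_ne_zero _).symm]
  · split_ifs
    · linarith
    · simp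
  · split_ifs <;> simp_all

/-- Gaussian random variables obtained by testing a matrix against the adapted family. -/
def adaptedCoords {n : ℕ} (b : Fin (n + 1) → EuclideanSpace ℝ (Fin (n + 1)))
    (W : Fin (n + 1) × Fin (n + 1) → ℝ) : (Unit ⊕ Fin n) ⊕ (Fin n × Fin n) → ℝ :=
  fun i => ∑ q, adaptedFamily b i q * W q

lemma quadForm_adapted {n : ℕ} (b : Fin (n + 1) → EuclideanSpace ℝ (Fin (n + 1)))
    (W : Fin (n + 1) × Fin (n + 1) → ℝ) (y : EuclideanSpace ℝ (Fin n)) :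
    quadForm W (b 0 + ∑ j, y j • b j.succ) = adaptedCoords b W (.inl (.inl ()))
      + √2 * ∑ j, adaptedCoords b W (.inl (.inr j)) * y j
      + quadForm (fun q => adaptedCoords b W (.inr q)) y := by
  have h2 : √2 * (√2)⁻¹ = (1 : ℝ) := mul_inv_cancel₀ (by positivity)
  have hv : ∀ q : Fin (n + 1) × Fin (n + 1),
      (b 0 + ∑ j, y j • b j.succ) q.1 * (b 0 + ∑ j, y j • b j.succ) q.2
      = adaptedFamily b (.inl (.inl ())) q
        + √2 * ∑ j, adaptedFamily b (.inl (.inr j)) q * y j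
        + ∑ r : Fin n × Fin n, y r.1 * y r.2 * adaptedFamily b (.inr r) q := by
    intro q
    simp only [adaptedFamily, PiLp.add_apply, PiLp.smul_apply, outer_apply, smul_eq_mul,
      WithLp.ofLp_sum, Finset.sum_apply, Fintype.sum_prod_type]
    have e1 : √2 * ∑ j, (√2)⁻¹ * (b 0 q.1 * b j.succ q.2 + b j.succ q.1 * b 0 q.2) * y j
        = b 0 q.1 * (∑ j, y j * b j.succ q.2) + (∑ j, y j * b j.succ q.1) * b 0 q.2 := by
      rw [Finset.mul_sum, Finset.mul_sum, Finset.sum_mul, ← Finset.sum_add_distrib]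
      refine Finset.sum_congr rfl fun j _ => ?_
      linear_combination (b 0 q.1 * b j.succ q.2 + b j.succ q.1 * b 0 q.2) * y j * h2
    have e2 : ∑ i, ∑ j, y i * y j * (b i.succ q.1 * b j.succ q.2)
        = (∑ j, y j * b j.succ q.1) * (∑ j, y j * b j.succ q.2) := by
      rw [Finset.sum_mul_sum]
      refine Finset.sum_congr rfl fun i _ => Finset.sum_congr rfl fun j _ => by ring
    rw [e1, e2]
    ring
  simp only [quadForm, adaptedCoords, hv]
  simp only [add_mul, Finset.sum_add_distrib, Finset.mul_sum, Finset.sum_mul]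
  congr 1
  · congr 1
    rw [Finset.sum_comm]
    refine Finset.sum_congr rfl fun i _ => Finset.sum_congr rfl fun j _ => by ring
  · rw [Finset.sum_comm]
    refine Finset.sum_congr rfl fun i _ => Finset.sum_congr rfl fun j _ => by ring

/-- Laplace functional of the largest value of the quadratic form of `M` among the vectors of
squared norm `T + 1` whose component along `u` is `1`. -/
def infExp {n : ℕ} (l : ℝ) (T : ℕ) (M : Fin n × Fin n → ℝ) (u : EuclideanSpace ℝ (Fin n)) : ℝ≥0∞ :=
  ⨅ x : {x : EuclideanSpace ℝ (Fin n) // inner ℝ u x = 1 ∧ ‖x‖ ^ 2 = (T : ℝ) + 1},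
    ENNReal.ofReal (Real.exp (-l * quadForm M x.1))

/-- The same functional in the coordinates of `adaptedCoords`. -/
def infExpCoords {n : ℕ} (l : ℝ) (T : ℕ) (z : Unit ⊕ Fin n → ℝ) (M : Fin n × Fin n → ℝ) : ℝ≥0∞ :=
  ⨅ y : {y : EuclideanSpace ℝ (Fin n) // ‖y‖ ^ 2 = (T : ℝ) + 1},
    ENNReal.ofReal (Real.exp (-l * (z (.inl ()) + √2 * ∑ j, z (.inr j) * y.1 j
      + quadForm M y.1)))

lemma measurable_infExpCoords {n : ℕ} (l : ℝ) (T : ℕ) :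
    Measurable fun w : (Unit ⊕ Fin n) ⊕ (Fin n × Fin n) → ℝ =>
      infExpCoords l T (fun i => w (.inl i)) (fun q => w (.inr q)) := by
  apply UpperSemicontinuous.measurable
  unfold infExpCoords quadForm
  refine upperSemicontinuous_iInf fun y => Continuous.upperSemicontinuous ?_
  exact ENNReal.continuous_ofReal.comp (by fun_prop)

lemma infExp_le_infExpCoords {n : ℕ} (l : ℝ) (T : ℕ)
    (b : Fin (n + 1) → EuclideanSpace ℝ (Fin (n + 1))) (hb : Orthonormal ℝ b)
    (W : Fin (n + 1) × Fin (n + 1) → ℝ) :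
    infExp l (T + 1) W (b 0) ≤ infExpCoords l T (fun i => adaptedCoords b W (.inl i))
      (fun q => adaptedCoords b W (.inr q)) := by
  refine le_iInf fun y => ?_
  have hb' := orthonormal_iff_ite.1 hb
  have hbs : Orthonormal ℝ fun j : Fin n => b j.succ := hb.comp _ (Fin.succ_injective n)
  have h0 : inner ℝ (b 0) (∑ j, y.1 j • b j.succ) = 0 := by
    simp [inner_sum, inner_smul_right, hb', (Fin.succ_ne_zero _).symm]
  have hx : inner ℝ (b 0) (b 0 + ∑ j, y.1 j • b j.succ) = 1 ∧
      ‖b 0 + ∑ j, y.1 j • b j.succ‖ ^ 2 = ((T + 1 : ℕ) : ℝ) + 1 := by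
    constructor
    · rw [inner_add_right, h0, hb']; simp
    · rw [norm_add_sq_real, h0, hb.1 0, ← real_inner_self_eq_norm_sq (∑ j, y.1 j • b j.succ),
        hbs.inner_sum]
      have := y.2
      rw [EuclideanSpace.real_norm_sq_eq] at this
      simp only [conj_trivial, ← sq]
      rw [this]
      push_cast
      ring
  refine (iInf_le _ ⟨_, hx⟩).trans ?_
  rw [quadForm_adapted]

lemma infExpCoords_le {n : ℕ} (hn : 1 ≤ n) (l : ℝ) (T : ℕ) (z : Unit ⊕ Fin n → ℝ) :
    ∃ u : EuclideanSpace ℝ (Fin n), ‖u‖ = 1 ∧ ∀ M : Fin n × Fin n → ℝ,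
      infExpCoords l T z M ≤ ENNReal.ofReal (Real.exp (-l * z (.inl ()))) *
        ENNReal.ofReal (Real.exp (-(l * √2) * √(∑ i, z (.inr i) ^ 2))) * infExp l T M u := by
  obtain ⟨u, hu, hzu⟩ : ∃ u : EuclideanSpace ℝ (Fin n), ‖u‖ = 1 ∧
      ∀ i, z (.inr i) = √(∑ i, z (.inr i) ^ 2) * u i := by
    set h : EuclideanSpace ℝ (Fin n) := WithLp.toLp 2 fun i => z (.inr i) with hh
    have hnorm : ‖h‖ = √(∑ i, z (.inr i) ^ 2) := by
      rw [EuclideanSpace.norm_eq]; simp [hh]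
    by_cases h0 : h = 0
    · refine ⟨EuclideanSpace.single ⟨0, hn⟩ 1, by simp, fun i => ?_⟩
      have : z (.inr i) = h i := rfl
      rw [← hnorm, this, h0]; simp
    · refine ⟨‖h‖⁻¹ • h, by
        rw [norm_smul, norm_inv, norm_norm, inv_mul_cancel₀ (norm_ne_zero_iff.2 h0)],
        fun i => ?_⟩
      rw [← hnorm]
      simp only [PiLp.smul_apply, smul_eq_mul]
      rw [← mul_assoc, mul_inv_cancel₀ (norm_ne_zero_iff.2 h0), one_mul]
  refine ⟨u, hu, fun M => ?_⟩
  unfold infExp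
  rw [ENNReal.mul_iInf_of_ne]
  · refine le_iInf fun x => ?_
    refine (iInf_le _ ⟨x.1, x.2.2⟩).trans ?_
    rw [← ENNReal.ofReal_mul (Real.exp_pos _).le, ← ENNReal.ofReal_mul (by positivity),
      ← Real.exp_add, ← Real.exp_add]
    apply le_of_eq
    congr 2
    have : ∑ j, z (.inr j) * x.1 j = √(∑ i, z (.inr i) ^ 2) := by
      have hx := x.2.1
      rw [PiLp.inner_apply] at hx
      calc ∑ j, z (.inr j) * x.1 j = √(∑ i, z (.inr i) ^ 2) * ∑ j, inner ℝ (u j) (x.1 j) := by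
            rw [Finset.mul_sum]
            refine Finset.sum_congr rfl fun j _ => ?_
            nth_rewrite 1 [hzu j]
            simp
            ring
        _ = _ := by rw [hx, mul_one]
    rw [this]
    ring
  · exact mul_ne_zero (by simpa using Real.exp_pos _) (by simpa using Real.exp_pos _)
  · exact ENNReal.mul_ne_top ENNReal.ofReal_ne_top ENNReal.ofReal_ne_top

lemma lintegral_infExp_le (l : ℝ) (n₀ : ℕ) (hn₀ : 1 ≤ n₀) (B : ℝ≥0∞)
    (hB : ∀ d, n₀ ≤ d → ∫⁻ h, ENNReal.ofReal (Real.exp (-(l * √2) * √(∑ i, h i ^ 2)))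
      ∂(gaussPi (Fin d)) ≤ B) (T n : ℕ) (hn : n₀ + T ≤ n) (u : EuclideanSpace ℝ (Fin n))
    (hu : ‖u‖ = 1) :
    ∫⁻ M, infExp l T M u ∂(gaussPi (Fin n × Fin n))
      ≤ ENNReal.ofReal (Real.exp (l ^ 2 / 2)) *
        (ENNReal.ofReal (Real.exp (l ^ 2 / 2)) * B) ^ T := by
  induction T generalizing n with
  | zero =>
    have hc : Orthonormal ℝ fun _ : Unit => outer u u := by
      rw [orthonormal_iff_ite]
      intro i j
      rw [inner_outer, real_inner_self_eq_norm_sq, hu]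
      simp
    have hmap := map_gaussPi_of_orthonormal _ hc
    have hle : ∀ M : Fin n × Fin n → ℝ, infExp l 0 M u ≤
        ENNReal.ofReal (Real.exp (-l * (fun _ : Unit => ∑ q, outer u u q * M q) ())) := by
      intro M
      exact iInf_le_of_le ⟨u, by simp [hu], by simp [hu]⟩ le_rfl
    refine (lintegral_mono hle).trans ?_
    rw [pow_zero, mul_one, ← lintegral_exp_neg_mul_gaussianReal,
      ← (measurePreserving_eval (fun _ : Unit => gaussianReal 0 1) ()).lintegral_comp
        (by fun_prop)]
    change _ ≤ ∫⁻ a, _ ∂(gaussPi Unit)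
    rw [← hmap, lintegral_map (by fun_prop) (by fun_prop)]
  | succ T ih =>
    obtain ⟨n, rfl⟩ : ∃ m, n = m + 1 := ⟨n - 1, by omega⟩
    obtain ⟨b, hb⟩ : ∃ b : OrthonormalBasis (Fin (n + 1)) ℝ (EuclideanSpace ℝ (Fin (n + 1))),
        ∀ i ∈ ({0} : Set (Fin (n + 1))), b i = (fun _ => u) i := by
      apply Orthonormal.exists_orthonormalBasis_extension_of_card_eq
      · simp
      · rw [orthonormal_iff_ite]
        rintro ⟨i, rfl⟩ ⟨j, rfl⟩
        simp [hu]
    obtain rfl : u = b 0 := (hb 0 rfl).symm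
    have hmap := map_gaussPi_of_orthonormal _ (orthonormal_adaptedFamily b b.orthonormal)
    calc ∫⁻ M, infExp l (T + 1) M (b 0) ∂(gaussPi (Fin (n + 1) × Fin (n + 1)))
        ≤ ∫⁻ W, infExpCoords l T (fun i => adaptedCoords b W (.inl i))
            (fun q => adaptedCoords b W (.inr q)) ∂(gaussPi (Fin (n + 1) × Fin (n + 1))) :=
          lintegral_mono fun W => infExp_le_infExpCoords l T b b.orthonormal W
      _ = ∫⁻ w, infExpCoords l T (fun i => w (.inl i)) (fun q => w (.inr q))
            ∂(gaussPi ((Unit ⊕ Fin n) ⊕ (Fin n × Fin n))) := by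
          rw [← hmap, lintegral_map (measurable_infExpCoords l T) (by fun_prop)]
          rfl
      _ = ∫⁻ r, infExpCoords l T r.1 r.2
            ∂((gaussPi (Unit ⊕ Fin n)).prod (gaussPi (Fin n × Fin n))) := by
          rw [← (measurePreserving_sumPiEquivProdPi_symm
            (fun _ : (Unit ⊕ Fin n) ⊕ (Fin n × Fin n) => gaussianReal 0 1)).lintegral_comp
            (measurable_infExpCoords l T)]
          rfl
      _ ≤ ∫⁻ z, ∫⁻ M, infExpCoords l T z M ∂(gaussPi (Fin n × Fin n))
            ∂(gaussPi (Unit ⊕ Fin n)) := lintegral_prod_le _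
      _ ≤ ∫⁻ z, ENNReal.ofReal (Real.exp (-l * z (.inl ()))) *
            ENNReal.ofReal (Real.exp (-(l * √2) * √(∑ i, z (.inr i) ^ 2))) *
            (ENNReal.ofReal (Real.exp (l ^ 2 / 2)) *
              (ENNReal.ofReal (Real.exp (l ^ 2 / 2)) * B) ^ T) ∂(gaussPi (Unit ⊕ Fin n)) := by
          refine lintegral_mono fun z => ?_
          obtain ⟨v, hv, hle⟩ := infExpCoords_le (by omega) l T z
          refine (lintegral_mono hle).trans ?_
          rw [lintegral_const_mul' _ _
            (ENNReal.mul_ne_top ENNReal.ofReal_ne_top ENNReal.ofReal_ne_top)]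
          exact mul_le_mul_right (ih n (by omega) v hv) _
      _ = (∫⁻ r : (Unit → ℝ) × (Fin n → ℝ), ENNReal.ofReal (Real.exp (-l * r.1 ())) *
            ENNReal.ofReal (Real.exp (-(l * √2) * √(∑ i, r.2 i ^ 2)))
            ∂((gaussPi Unit).prod (gaussPi (Fin n)))) *
            (ENNReal.ofReal (Real.exp (l ^ 2 / 2)) *
              (ENNReal.ofReal (Real.exp (l ^ 2 / 2)) * B) ^ T) := by
          rw [lintegral_mul_const _ (by fun_prop),
            ← (measurePreserving_sumPiEquivProdPi_symm
              (fun _ : Unit ⊕ Fin n => gaussianReal 0 1)).lintegral_comp (by fun_prop)]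
          rfl
      _ ≤ (ENNReal.ofReal (Real.exp (l ^ 2 / 2)) * B) *
            (ENNReal.ofReal (Real.exp (l ^ 2 / 2)) *
              (ENNReal.ofReal (Real.exp (l ^ 2 / 2)) * B) ^ T) := by
          refine mul_le_mul_left ?_ _
          rw [lintegral_prod_mul (f := fun a : Unit → ℝ => ENNReal.ofReal (Real.exp (-l * a ())))
            (g := fun h : Fin n → ℝ =>
              ENNReal.ofReal (Real.exp (-(l * √2) * √(∑ i, h i ^ 2))))
            (Measurable.aemeasurable (by fun_prop)) (Measurable.aemeasurable (by fun_prop))]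
          refine mul_le_mul' (le_of_eq ?_) (hB n (by omega))
          rw [← lintegral_exp_neg_mul_gaussianReal,
            ← (measurePreserving_eval (fun _ : Unit => gaussianReal 0 1) ()).lintegral_comp
              (by fun_prop)]
      _ = _ := by ring

/-- Chernoff bound for the event that a Gaussian quadratic form is bounded by `τ` on the sphere. -/
lemma gaussPi_quadForm_le (l : ℝ) (hl : 0 ≤ l) (n₀ : ℕ) (hn₀ : 1 ≤ n₀) (B : ℝ≥0∞)
    (hB : ∀ d, n₀ ≤ d → ∫⁻ h, ENNReal.ofReal (Real.exp (-(l * √2) * √(∑ i, h i ^ 2)))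
      ∂(gaussPi (Fin d)) ≤ B) (T n : ℕ) (hn : n₀ + T ≤ n) (τ : ℝ) :
    gaussPi (Fin n × Fin n) {M | ∀ x, quadForm M x ≤ τ * ‖x‖ ^ 2}
      ≤ ENNReal.ofReal (Real.exp (l * (τ * (T + 1)))) * (ENNReal.ofReal (Real.exp (l ^ 2 / 2)) *
        (ENNReal.ofReal (Real.exp (l ^ 2 / 2)) * B) ^ T) := by
  set u : EuclideanSpace ℝ (Fin n) := EuclideanSpace.single ⟨0, by omega⟩ 1
  have hu : ‖u‖ = 1 := by simp [u]
  refine le_trans ?_ (mul_le_mul_right (lintegral_infExp_le l n₀ hn₀ B hB T n hn u hu) _)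
  rw [← lintegral_const_mul' _ _ ENNReal.ofReal_ne_top]
  have hS : MeasurableSet {M : Fin n × Fin n → ℝ | ∀ x, quadForm M x ≤ τ * ‖x‖ ^ 2} := by
    rw [Set.ofPred_forall]
    refine (isClosed_iInter fun x => isClosed_le ?_ continuous_const).measurableSet
    unfold quadForm
    fun_prop
  rw [← lintegral_indicator_one hS]
  refine lintegral_mono fun M => ?_
  by_cases hM : M ∈ {M : Fin n × Fin n → ℝ | ∀ x, quadForm M x ≤ τ * ‖x‖ ^ 2}
  swap
  · rw [Set.indicator_of_notMem hM]
    exact zero_le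
  rw [Set.indicator_of_mem hM]
  unfold infExp
  rw [ENNReal.mul_iInf_of_ne (by simpa using Real.exp_pos _) ENNReal.ofReal_ne_top]
  refine le_iInf fun x => ?_
  rw [← ENNReal.ofReal_mul (Real.exp_pos _).le, ← Real.exp_add, Pi.one_apply,
    ENNReal.one_le_ofReal]
  apply Real.one_le_exp
  have := hM x.1
  rw [x.2.2] at this
  nlinarith

lemma inv_sqrt_one_add_le (s : ℝ) (hs : 0 ≤ s) (hs' : s ≤ 1 / 4) :
    (√(1 + 2 * s))⁻¹ ≤ Real.exp (-(s - 2 * s ^ 2)) := by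
  rw [Real.exp_neg]
  gcongr
  apply Real.le_sqrt_of_sq_le
  rw [← Real.exp_nat_mul]
  have h := Real.abs_exp_sub_one_sub_id_le (x := 2 * s - 4 * s ^ 2)
    (by rw [abs_le]; constructor <;> nlinarith)
  have h2 := (abs_le.1 h).2
  have : ((2 : ℕ) : ℝ) * (s - 2 * s ^ 2) = 2 * s - 4 * s ^ 2 := by push_cast; ring
  rw [this]
  have h3 : (2 * s - 4 * s ^ 2) ^ 2 ≤ (2 * s) ^ 2 :=
    pow_le_pow_left₀ (by nlinarith) (by nlinarith) 2
  nlinarith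

set_option maxHeartbeats 1000000 in
/-- A Gaussian quadratic form stays below its typical maximum on the sphere only with probability
`exp (-c N²)`. -/
lemma gaussPi_quadForm_le_exp (δ : ℝ) (hδ : 0 < δ) (hδ1 : δ ≤ 1) (m N n : ℕ) (hn : N ≤ n + m)
    (hNm : 16 * (m : ℝ) ≤ δ * N) (hN1 : 4 * 256 ≤ δ ^ 3 * N) :
    gaussPi (Fin n × Fin n) {M | ∀ x, quadForm M x ≤ √N * (√2 - δ) * ‖x‖ ^ 2}
      ≤ ENNReal.ofReal (Real.exp (-(δ ^ 4 / 32768) * (N : ℝ) ^ 2)) := by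
  set μ : ℝ := δ ^ 2 / 256 with hμ
  set s : ℝ := δ / 16 with hs
  set ρ : ℝ := 1 - δ / 4 with hρ
  set T : ℕ := ⌊s * N⌋₊ with hT
  have hμ0 : 0 < μ := by positivity
  have hs0 : 0 < s := by positivity
  have hN0 : (0 : ℝ) ≤ N := Nat.cast_nonneg N
  have hNbig : 1024 ≤ (N : ℝ) := by
    have : δ ^ 3 ≤ 1 := pow_le_one₀ hδ.le hδ1
    nlinarith
  have hTle : (T : ℝ) ≤ s * N := Nat.floor_le (by positivity)
  have hTge : s * N - 1 ≤ (T : ℝ) := by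
    have := Nat.lt_floor_add_one (s * N)
    linarith
  have hnR : (N : ℝ) ≤ n + m := by exact_mod_cast hn
  have hTn : T ≤ n := by
    have : (T : ℝ) ≤ n := by nlinarith
    exact_mod_cast this
  obtain ⟨n₀, hn₀⟩ : ∃ n₀, n = n₀ + T := ⟨n - T, by omega⟩
  have hn₀R : (n : ℝ) = n₀ + T := by exact_mod_cast hn₀
  have hn₀N : (1 - δ / 8) * N ≤ n₀ := by nlinarith
  have hn₀1 : 1 ≤ n₀ := by
    have : (1 : ℝ) ≤ n₀ := by nlinarith
    exact_mod_cast this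
  have hsq : √(N : ℝ) * √N = N := Real.mul_self_sqrt hN0
  have h2sq : √(2 : ℝ) * √2 = 2 := Real.mul_self_sqrt (by norm_num)
  have h2nn : 0 ≤ √(2 : ℝ) := Real.sqrt_nonneg _
  have h2lt : √(2 : ℝ) ≤ 3 / 2 := by nlinarith
  set l : ℝ := μ * √N with hl
  have hl0 : 0 ≤ l := by positivity
  have hB : ∀ d, n₀ ≤ d → ∫⁻ h, ENNReal.ofReal (Real.exp (-(l * √2) * √(∑ i, h i ^ 2)))
      ∂(gaussPi (Fin d)) ≤ ENNReal.ofReal (2 * Real.exp (-(√2 * μ * ρ * N))) := by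
    intro d hd
    refine (lintegral_exp_neg_norm_le d n₀ hd (l * √2) (ρ * √N) s (by positivity) hs0.le).trans ?_
    apply ENNReal.ofReal_le_ofReal
    have e1 : -(l * √2) * (ρ * √N) = -(√2 * μ * ρ * N) := by
      rw [hl]; linear_combination (-μ * √2 * ρ) * hsq
    have e2 : Real.exp (s * (ρ * √N) ^ 2) * (√(1 + 2 * s))⁻¹ ^ n₀
        ≤ Real.exp (-(√2 * μ * ρ * N)) := by
      calc Real.exp (s * (ρ * √N) ^ 2) * (√(1 + 2 * s))⁻¹ ^ n₀
          ≤ Real.exp (s * (ρ * √N) ^ 2) * Real.exp (-(s - 2 * s ^ 2)) ^ n₀ := by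
            gcongr
            exact inv_sqrt_one_add_le s hs0.le (by rw [hs]; linarith)
        _ = Real.exp (s * (ρ ^ 2 * N) + n₀ * (-(s - 2 * s ^ 2))) := by
            rw [← Real.exp_nat_mul, ← Real.exp_add, mul_pow, sq (√(N : ℝ)), hsq]
        _ ≤ _ := by
            apply Real.exp_le_exp.2
            have hpos : 0 ≤ s - 2 * s ^ 2 := by rw [hs]; nlinarith
            have a1 : (1 - δ / 8) * N * (s - 2 * s ^ 2) ≤ n₀ * (s - 2 * s ^ 2) :=
              mul_le_mul_of_nonneg_right hn₀N hpos
            have hρ1 : ρ ≤ 1 := by rw [hρ]; linarith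
            have hρ0 : 0 ≤ ρ := by rw [hρ]; linarith
            have a2 : √2 * μ * ρ ≤ 2 * μ := by
              have : √2 * ρ ≤ 2 := by nlinarith
              nlinarith
            have a3 : s * ρ ^ 2 - (1 - δ / 8) * (s - 2 * s ^ 2) ≤ -(2 * μ) := by
              rw [hρ, hs, hμ]
              have : 0 ≤ δ ^ 2 * (1 - δ) := mul_nonneg (sq_nonneg _) (by linarith)
              nlinarith
            have a4 := mul_le_mul_of_nonneg_right a3 hN0
            have a5 := mul_le_mul_of_nonneg_right a2 hN0
            linarith
    rw [e1]
    linarith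
  refine (gaussPi_quadForm_le l hl0 n₀ hn₀1 _ hB T n hn₀.ge _).trans ?_
  rw [← ENNReal.ofReal_mul (by positivity), ← ENNReal.ofReal_pow (by positivity),
    ← ENNReal.ofReal_mul (by positivity), ← ENNReal.ofReal_mul (by positivity)]
  apply ENNReal.ofReal_le_ofReal
  have h2e : (2 : ℝ) ≤ Real.exp 1 := by
    have := Real.add_one_le_exp (1 : ℝ)
    linarith
  calc Real.exp (l * (√N * (√2 - δ) * (T + 1))) * (Real.exp (l ^ 2 / 2) *
        (Real.exp (l ^ 2 / 2) * (2 * Real.exp (-(√2 * μ * ρ * N)))) ^ T)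
      ≤ Real.exp (l * (√N * (√2 - δ) * (T + 1))) * (Real.exp (l ^ 2 / 2) *
        (Real.exp (l ^ 2 / 2) * (Real.exp 1 * Real.exp (-(√2 * μ * ρ * N)))) ^ T) := by gcongr
    _ = Real.exp (μ * N * (√2 - δ) * (T + 1) + (μ ^ 2 * N / 2 +
          T * (μ ^ 2 * N / 2 + (1 + -(√2 * μ * ρ * N))))) := by
        rw [← Real.exp_add, ← Real.exp_add, ← Real.exp_nat_mul, ← Real.exp_add, ← Real.exp_add]
        congr 1
        have : l ^ 2 = μ ^ 2 * N := by rw [hl, mul_pow, sq (√(N : ℝ)), hsq]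
        rw [this, hl]
        linear_combination (μ * (√2 - δ) * (T + 1)) * hsq
    _ ≤ _ := by
        apply Real.exp_le_exp.2
        have hμδ : μ ≤ δ / 256 := by rw [hμ]; nlinarith
        have b0 : μ * N * (√2 - δ) + μ ^ 2 * N / 2 - √2 * μ * ρ * N + 1 ≤ -(μ * N * δ / 4) := by
          have c1 : √2 - δ + μ / 2 - √2 * ρ ≤ -(δ / 2) := by
            have : √2 * ρ = √2 - √2 * δ / 4 := by rw [hρ]; ring
            nlinarith
          have c2 : 1 ≤ μ * N * δ / 4 := by rw [hμ]; nlinarith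
          have c3 : (μ * N) * (√2 - δ + μ / 2 - √2 * ρ) ≤ (μ * N) * (-(δ / 2)) :=
            mul_le_mul_of_nonneg_left c1 (by positivity)
          nlinarith
        have b1 : μ * N * (√2 - δ) + μ ^ 2 * N / 2 ≤ 2 * (μ * N) := by
          have : √2 - δ + μ / 2 ≤ 2 := by nlinarith
          have := mul_le_mul_of_nonneg_left this (show 0 ≤ μ * N by positivity)
          nlinarith
        have b2 : (T : ℝ) * (μ * N * (√2 - δ) + μ ^ 2 * N / 2 - √2 * μ * ρ * N + 1)
            ≤ T * (-(μ * N * δ / 4)) := mul_le_mul_of_nonneg_left b0 (Nat.cast_nonneg _)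
        have b3 : (s * N - 1) * (μ * N * δ / 4) ≤ T * (μ * N * δ / 4) :=
          mul_le_mul_of_nonneg_right hTge (by positivity)
        have b4 : 2 * (μ * N) + (μ * N * δ / 4) ≤ δ ^ 4 / 32768 * N ^ 2 := by
          have d1 : 1024 ≤ δ ^ 2 * N := by
            have : δ ^ 3 ≤ δ ^ 2 := pow_le_pow_of_le_one hδ.le hδ1 (by norm_num)
            nlinarith
          have d2 : 2 * 128 + δ / 4 * 128 ≤ δ ^ 2 * N := by nlinarith
          have := mul_le_mul_of_nonneg_left d2 (show 0 ≤ μ * N / 128 by positivity)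
          rw [hμ] at this ⊢
          nlinarith
        have b5 : s * N * (μ * N * δ / 4) = 2 * (δ ^ 4 / 32768 * N ^ 2) := by
          rw [hs, hμ]; ring
        nlinarith

/-- The multilinear form of a tensor. -/
def tensorForm {p N : ℕ} (g : (Fin p → Fin N) → ℝ) :
    MultilinearMap ℝ (fun _ : Fin p => Fin N → ℝ) ℝ :=
  ∑ j : Fin p → Fin N, g j •
    (MultilinearMap.mkPiAlgebra ℝ (Fin p) ℝ).compLinearMap fun c => LinearMap.proj (j c)

lemma tensorForm_apply {p N : ℕ} (g : (Fin p → Fin N) → ℝ) (x : Fin p → Fin N → ℝ) :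
    tensorForm g x = ∑ j, g j * ∏ c, x c (j c) := by
  simp [tensorForm]

/-- The vectors `v`, `w` placed at positions `a`, `b`, and `s` elsewhere. -/
def slot {p : ℕ} {V : Type*} (s : V) (a b : Fin p) (v w : V) : Fin p → V :=
  Function.update (Function.update (fun _ => s) a v) b w

/-- The Hessian quadratic form at `s` of the homogeneous polynomial of a tensor. -/
def hessForm {p N : ℕ} (g : (Fin p → Fin N) → ℝ) (s v : Fin N → ℝ) : ℝ :=
  ∑ a : Fin p, ∑ b : Fin p, if a = b then 0 else tensorForm g (slot s a b v v)

lemma abs_tensorForm_le {p N : ℕ} (g : (Fin p → Fin N) → ℝ) (x : Fin p → Fin N → ℝ) :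
    ‖tensorForm g x‖ ≤ (∑ j, |g j|) * ∏ c, ‖x c‖ := by
  rw [tensorForm_apply, Finset.sum_mul]
  refine (norm_sum_le _ _).trans (Finset.sum_le_sum fun j _ => ?_)
  rw [norm_mul, Real.norm_eq_abs, norm_prod]
  gcongr with c
  exact norm_le_pi_norm _ _

/-- The continuous multilinear form of a tensor. -/
def tensorFormCont {p N : ℕ} (g : (Fin p → Fin N) → ℝ) :
    ContinuousMultilinearMap ℝ (fun _ : Fin p => Fin N → ℝ) ℝ :=
  (tensorForm g).mkContinuous (∑ j, |g j|) (abs_tensorForm_le g)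

lemma tensorFormCont_apply {p N : ℕ} (g : (Fin p → Fin N) → ℝ) (x : Fin p → Fin N → ℝ) :
    tensorFormCont g x = tensorForm g x := rfl

lemma hasFDerivAt_tensorForm_comp {p N : ℕ} (g : (Fin p → Fin N) → ℝ)
    (m : (Fin N → ℝ) → Fin p → Fin N → ℝ) (m' : (Fin N → ℝ) →L[ℝ] Fin p → Fin N → ℝ)
    (τ : Fin N → ℝ) (hm : HasFDerivAt m m' τ) :
    HasFDerivAt (fun τ => tensorForm g (m τ))
      (((tensorFormCont g).linearDeriv (m τ)).comp m') τ :=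
  ((tensorFormCont g).hasFDerivAt (m τ)).comp τ hm

lemma hasFDerivAt_diag {p N : ℕ} (τ : Fin N → ℝ) :
    HasFDerivAt (fun (τ : Fin N → ℝ) (_ : Fin p) => τ)
      (ContinuousLinearMap.pi fun _ => ContinuousLinearMap.id ℝ _) τ :=
  (ContinuousLinearMap.pi fun _ : Fin p => ContinuousLinearMap.id ℝ (Fin N → ℝ)).hasFDerivAt

lemma fderiv_tensorForm_diag {p N : ℕ} (g : (Fin p → Fin N) → ℝ) (τ w : Fin N → ℝ) :
    fderiv ℝ (fun τ => tensorForm g fun _ => τ) τ w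
      = ∑ a, tensorForm g (Function.update (fun _ => τ) a w) := by
  rw [(hasFDerivAt_tensorForm_comp g _ _ τ (hasFDerivAt_diag τ)).fderiv]
  simp [ContinuousMultilinearMap.linearDeriv_apply, tensorFormCont_apply]

lemma hasFDerivAt_update_const {p N : ℕ} (a : Fin p) (τ w : Fin N → ℝ) :
    HasFDerivAt (fun (τ : Fin N → ℝ) => Function.update (fun _ : Fin p => τ) a w)
      (ContinuousLinearMap.pi fun c => if c = a then 0 else ContinuousLinearMap.id ℝ _) τ := by
  rw [hasFDerivAt_pi]
  intro c
  by_cases h : c = a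
  · subst h
    simp only [Function.update_self, if_true]
    exact hasFDerivAt_const (𝕜 := ℝ) w τ
  · simp only [Function.update_of_ne h, if_neg h]
    exact hasFDerivAt_id (𝕜 := ℝ) τ

lemma fderiv_fderiv_tensorForm_diag {p N : ℕ} (g : (Fin p → Fin N) → ℝ) (τ v : Fin N → ℝ) :
    fderiv ℝ (fun τ => ∑ a, tensorForm g (Function.update (fun _ => τ) a v)) τ v
      = hessForm g τ v := by
  rw [(HasFDerivAt.fun_sum fun a _ => hasFDerivAt_tensorForm_comp g _ _ τ
    (hasFDerivAt_update_const a τ v)).fderiv]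
  simp only [sum_apply, ContinuousLinearMap.comp_apply,
    ContinuousMultilinearMap.linearDeriv_apply, tensorFormCont_apply, hessForm, slot]
  refine Finset.sum_congr rfl fun a _ => Finset.sum_congr rfl fun b _ => ?_
  by_cases h : a = b
  · subst h
    simp only [if_true, ContinuousLinearMap.pi_apply]
    exact (tensorForm g).map_update_zero _ a
  · simp [h, Ne.symm h]

lemma hamiltonian_pure {p N : ℕ} (hp : 2 ≤ p) (g : (k : ℕ) → (Fin k → Fin N) → ℝ)
    (σ : Fin N → ℝ) :
    hamiltonian N p (pureC p) g σ
      = (N : ℝ) ^ (-(((p : ℝ) - 1) / 2)) * tensorForm (g p) fun _ => σ := by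
  unfold hamiltonian pureC
  rw [Finset.sum_eq_single p]
  · simp [tensorForm_apply]
  · intro k _ hk
    simp [hk]
  · intro h
    exact absurd (Finset.mem_Icc.2 ⟨hp, le_rfl⟩) h

lemma fderiv_hamiltonian_pure {p N : ℕ} (hp : 2 ≤ p) (g : (k : ℕ) → (Fin k → Fin N) → ℝ)
    (σ w : Fin N → ℝ) :
    fderiv ℝ (hamiltonian N p (pureC p) g) σ w = (N : ℝ) ^ (-(((p : ℝ) - 1) / 2)) *
      ∑ a, tensorForm (g p) (Function.update (fun _ => σ) a w) := by
  have : hamiltonian N p (pureC p) g = fun σ => (N : ℝ) ^ (-(((p : ℝ) - 1) / 2)) *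
      tensorForm (g p) fun _ => σ := funext (hamiltonian_pure hp g)
  rw [this, fderiv_const_mul
    (hasFDerivAt_tensorForm_comp (g p) _ _ σ (hasFDerivAt_diag σ)).differentiableAt,
    ← fderiv_tensorForm_diag]
  simp

lemma hessH_pure {p N : ℕ} (hp : 2 ≤ p) (g : (k : ℕ) → (Fin k → Fin N) → ℝ)
    (σ v : Fin N → ℝ) :
    hessH N p (pureC p) g σ v v
      = (N : ℝ) ^ (-(((p : ℝ) - 1) / 2)) * hessForm (g p) σ v := by
  unfold hessH
  simp only [fderiv_hamiltonian_pure hp]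
  rw [fderiv_const_mul (HasFDerivAt.fun_sum fun a _ => hasFDerivAt_tensorForm_comp (g p) _ _ σ
    (hasFDerivAt_update_const a σ v)).differentiableAt, ← fderiv_fderiv_tensorForm_diag]
  simp

/-- Euler's identity for the Hamiltonian. -/
lemma dotp_gradH_pure {p N : ℕ} (hp : 2 ≤ p) (g : (k : ℕ) → (Fin k → Fin N) → ℝ)
    (σ : Fin N → ℝ) :
    dotp (gradH N p (pureC p) g σ) σ = p * hamiltonian N p (pureC p) g σ := by
  have h1 : dotp (gradH N p (pureC p) g σ) σ = fderiv ℝ (hamiltonian N p (pureC p) g) σ σ := by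
    conv_rhs => rw [← Finset.univ_sum_single σ]
    unfold dotp gradH
    conv_rhs => rw [map_sum]
    refine Finset.sum_congr rfl fun i _ => ?_
    have : (Pi.single i (σ i) : Fin N → ℝ) = σ i • Pi.single i 1 := by
      rw [← Pi.single_smul, smul_eq_mul, mul_one]
    conv_rhs => rw [this, map_smul, smul_eq_mul, mul_comm]
    simp only [Finset.univ_sum_single]
  rw [h1, fderiv_hamiltonian_pure hp, hamiltonian_pure hp]
  simp
  ring

lemma hessForm_smul {p N : ℕ} (g : (Fin p → Fin N) → ℝ) (t : ℝ) (s v : Fin N → ℝ) :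
    hessForm g (t • s) v = t ^ (p - 2) * hessForm g s v := by
  unfold hessForm
  simp only [Finset.mul_sum]
  refine Finset.sum_congr rfl fun a _ => Finset.sum_congr rfl fun b _ => ?_
  by_cases h : a = b
  · simp [h]
  simp only [h, if_false]
  have : slot (t • s) a b v v = fun c => (if c = a ∨ c = b then 1 else t) • slot s a b v v c := by
    funext c
    by_cases hb : c = b
    · subst hb; simp [slot]
    · by_cases ha : c = a
      · subst ha; simp [slot, hb]
      · simp [slot, ha, hb]
  rw [this, MultilinearMap.map_smul_univ, smul_eq_mul]
  congr 1
  rw [Finset.prod_ite, Finset.prod_const_one, Finset.prod_const, one_mul]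
  congr 1
  have : (Finset.univ.filter fun c : Fin p => ¬(c = a ∨ c = b)) = Finset.univ \ {a, b} := by
    ext c; simp
  rw [this, Finset.card_sdiff_of_subset (Finset.subset_univ _), Finset.card_pair h]
  simp

/-- The pairs of distinct positions, in increasing order. -/
def posPairs (p : ℕ) : Finset (Fin p × Fin p) := Finset.univ.filter fun q => q.1 < q.2

lemma sum_ne_eq_two_mul {p : ℕ} (f : Fin p → Fin p → ℝ) (hf : ∀ a b, a ≠ b → f a b = f b a) :
    ∑ a, ∑ b, (if a = b then 0 else f a b) = 2 * ∑ q ∈ posPairs p, f q.1 q.2 := by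
  have h1 : ∀ a b : Fin p, (if a = b then 0 else f a b)
      = (if a < b then f a b else 0) + (if b < a then f b a else 0) := by
    intro a b
    rcases lt_trichotomy a b with h | h | h
    · simp [h, h.ne, h.not_gt]
    · simp [h]
    · simp [h, h.ne', h.not_gt, hf a b h.ne']
  simp only [h1, Finset.sum_add_distrib]
  rw [Finset.sum_comm (f := fun a b => if b < a then f b a else 0), ← two_mul]
  congr 1
  rw [posPairs, Finset.sum_filter, Fintype.sum_prod_type]

lemma card_posPairs (p : ℕ) : 2 * ((posPairs p).card : ℝ) = p * (p - 1) := by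
  have := sum_ne_eq_two_mul (p := p) (fun _ _ => 1) (fun _ _ _ => rfl)
  simp only [Finset.sum_const, nsmul_eq_mul, mul_one] at this
  rw [← this]
  have h : ∀ a : Fin p, ∑ b : Fin p, (if a = b then (0 : ℝ) else 1) = p - 1 := by
    intro a
    have : ∀ b : Fin p, (if a = b then (0 : ℝ) else 1) = 1 - if a = b then 1 else 0 := by
      intro b; split_ifs <;> simp
    simp [this]
  simp [h]
  ring

lemma hessForm_eq_posPairs {p N : ℕ} (g : (Fin p → Fin N) → ℝ) (s v : Fin N → ℝ) :
    hessForm g s v = 2 * ∑ q ∈ posPairs p, tensorForm g (slot s q.1 q.2 v v) := by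
  apply sum_ne_eq_two_mul
  intro a b hab
  rw [slot, slot, Function.update_comm hab]

/-- The pure tensor of a family of vectors. -/
def pureTensor {p N : ℕ} (x : Fin p → EuclideanSpace ℝ (Fin N)) :
    EuclideanSpace ℝ (Fin p → Fin N) :=
  WithLp.toLp 2 fun j => ∏ c, x c (j c)

lemma inner_pureTensor {p N : ℕ} (x y : Fin p → EuclideanSpace ℝ (Fin N)) :
    inner ℝ (pureTensor x) (pureTensor y) = ∏ c, inner ℝ (x c) (y c) := by
  simp only [PiLp.inner_apply, pureTensor, RCLike.inner_apply, conj_trivial]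
  rw [Finset.prod_univ_sum, Fintype.piFinset_univ]
  simp only [Finset.prod_mul_distrib]

lemma tensorForm_eq_sum_pureTensor {p N : ℕ} (g : (Fin p → Fin N) → ℝ)
    (x : Fin p → EuclideanSpace ℝ (Fin N)) :
    tensorForm g (fun c => (x c).ofLp) = ∑ j, pureTensor x j * g j := by
  rw [tensorForm_apply]
  exact Finset.sum_congr rfl fun j _ => mul_comm _ _

lemma slot_apply {p : ℕ} {V : Type*} (s : V) (a b : Fin p) (v w : V) (c : Fin p) :
    slot s a b v w c = if c = b then w else if c = a then v else s := by
  simp [slot, Function.update_apply]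

lemma slot_ofLp {p N : ℕ} (s : EuclideanSpace ℝ (Fin N)) (a b : Fin p)
    (v w : EuclideanSpace ℝ (Fin N)) :
    slot s.ofLp a b v.ofLp w.ofLp = fun c => (slot s a b v w c).ofLp := by
  funext c
  simp only [slot_apply]
  split_ifs <;> rfl

lemma inner_pureTensor_slot {p N n : ℕ} (s : EuclideanSpace ℝ (Fin N)) (hs : ‖s‖ = 1)
    (e : Fin n → EuclideanSpace ℝ (Fin N)) (he : Orthonormal ℝ e)
    (hes : ∀ i, inner ℝ s (e i) = 0) {q r : Fin p × Fin p} (hq : q ∈ posPairs p)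
    (hr : r ∈ posPairs p) (i j i' j' : Fin n) :
    inner ℝ (pureTensor (slot s q.1 q.2 (e i) (e j)))
      (pureTensor (slot s r.1 r.2 (e i') (e j')))
      = if q = r ∧ (i, j) = (i', j') then 1 else 0 := by
  obtain ⟨a, b⟩ := q
  obtain ⟨a', b'⟩ := r
  have hab : a < b := by simpa [posPairs] using hq
  have hab' : a' < b' := by simpa [posPairs] using hr
  have hse : ∀ i, inner ℝ (e i) s = 0 := fun i => by rw [real_inner_comm]; exact hes i
  have hin := orthonormal_iff_ite.1 he
  rw [inner_pureTensor]
  by_cases hqr : a = a' ∧ b = b'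
  · obtain ⟨rfl, rfl⟩ := hqr
    by_cases hij : i = i' ∧ j = j'
    · obtain ⟨rfl, rfl⟩ := hij
      simp only [and_self, if_true]
      refine Finset.prod_eq_one fun c _ => ?_
      rw [real_inner_self_eq_norm_sq, slot_apply]
      split_ifs
      · rw [he.norm_eq_one, one_pow]
      · rw [he.norm_eq_one, one_pow]
      · rw [hs, one_pow]
    · have : ¬ ((i, j) = (i', j')) := by simpa using hij
      simp only [this, and_false, if_false]
      by_cases hi : i = i'
      · have hj : j ≠ j' := fun h => hij ⟨hi, h⟩
        refine Finset.prod_eq_zero (Finset.mem_univ b) ?_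
        simp [slot_apply, hin, hj]
      · refine Finset.prod_eq_zero (Finset.mem_univ a) ?_
        simp [slot_apply, hin, hi, hab.ne]
  · have hne : ¬ ((a, b) = (a', b')) := by simpa using hqr
    simp only [hne, false_and, if_false]
    by_cases ha : a = a' ∨ a = b'
    · have hb : ¬ (b = a' ∨ b = b') := by
        intro hb
        apply hqr
        rcases ha with rfl | rfl <;> rcases hb with rfl | rfl
        · exact absurd hab (lt_irrefl _)
        · exact ⟨rfl, rfl⟩
        · exact absurd hab hab'.not_gt
        · exact absurd hab (lt_irrefl _)
      push Not at hb
      refine Finset.prod_eq_zero (Finset.mem_univ b) ?_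
      simp [slot_apply, hb.1, hb.2, hse]
    · push Not at ha
      refine Finset.prod_eq_zero (Finset.mem_univ a) ?_
      simp [slot_apply, hab.ne, ha.1, ha.2, hse]

/-- The normalized coefficients, as functions of the tensor, of the compression of the Hessian
at `s` to the span of `e`. -/
def hessCoeff (p : ℕ) {N n : ℕ} (s : EuclideanSpace ℝ (Fin N))
    (e : Fin n → EuclideanSpace ℝ (Fin N)) (q : Fin n × Fin n) :
    EuclideanSpace ℝ (Fin p → Fin N) :=
  (√((posPairs p).card : ℝ))⁻¹ •
    ∑ r ∈ posPairs p, pureTensor (slot s r.1 r.2 (e q.1) (e q.2))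

lemma orthonormal_hessCoeff {p N n : ℕ} (hp : 0 < (posPairs p).card)
    (s : EuclideanSpace ℝ (Fin N)) (hs : ‖s‖ = 1)
    (e : Fin n → EuclideanSpace ℝ (Fin N)) (he : Orthonormal ℝ e)
    (hes : ∀ i, inner ℝ s (e i) = 0) : Orthonormal ℝ (hessCoeff p s e) := by
  rw [orthonormal_iff_ite]
  intro q q'
  have hc : (0 : ℝ) < (posPairs p).card := by exact_mod_cast hp
  simp only [hessCoeff, inner_smul_left, inner_smul_right, sum_inner, inner_sum, conj_trivial]
  rw [← Finset.mul_sum, Finset.sum_congr rfl fun r hr => Finset.sum_congr rfl fun r' hr' =>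
    inner_pureTensor_slot s hs e he hes hr' hr _ _ _ _]
  by_cases h : q = q'
  · subst h
    have : ∀ r ∈ posPairs p, ∑ r' ∈ posPairs p,
        (if r' = r ∧ (q.1, q.2) = (q.1, q.2) then (1 : ℝ) else 0) = 1 := by
      intro r hr
      simp [hr]
    rw [Finset.sum_congr rfl this]
    simp only [Finset.sum_const, nsmul_eq_mul, mul_one, if_true]
    have := Real.mul_self_sqrt hc.le
    have h0 := (Real.sqrt_pos.2 hc).ne'
    field_simp
    rw [sq, this]
  · simp [h]

lemma slot_tensorForm_sum {p N n : ℕ} (g : (Fin p → Fin N) → ℝ) (s : Fin N → ℝ)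
    (e : Fin n → Fin N → ℝ) (y : Fin n → ℝ) {a b : Fin p} (hab : a ≠ b) :
    tensorForm g (slot s a b (∑ i, y i • e i) (∑ i, y i • e i))
      = ∑ i, ∑ j, y i * y j * tensorForm g (slot s a b (e i) (e j)) := by
  unfold slot
  rw [MultilinearMap.map_update_sum, Finset.sum_comm]
  refine Finset.sum_congr rfl fun j _ => ?_
  rw [Function.update_comm hab, MultilinearMap.map_update_sum]
  refine Finset.sum_congr rfl fun i _ => ?_
  rw [MultilinearMap.map_update_smul, Function.update_comm hab.symm,
    MultilinearMap.map_update_smul, smul_eq_mul, smul_eq_mul, mul_assoc]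

lemma hessForm_eq_quadForm {p N n : ℕ} (hp : 0 < (posPairs p).card) (g : (Fin p → Fin N) → ℝ)
    (s : EuclideanSpace ℝ (Fin N)) (e : Fin n → EuclideanSpace ℝ (Fin N))
    (y : EuclideanSpace ℝ (Fin n)) :
    hessForm g s.ofLp (∑ i, y i • e i).ofLp
      = 2 * √((posPairs p).card : ℝ) *
        quadForm (fun q => ∑ j, hessCoeff p s e q j * g j) y := by
  have hc : (0 : ℝ) < (posPairs p).card := by exact_mod_cast hp
  have h0 := (Real.sqrt_pos.2 hc).ne'
  have h1 : ∀ q : Fin n × Fin n, ∑ j, hessCoeff p s e q j * g j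
      = (√((posPairs p).card : ℝ))⁻¹ * ∑ r ∈ posPairs p,
        tensorForm g (slot s.ofLp r.1 r.2 (e q.1).ofLp (e q.2).ofLp) := by
    intro q
    simp only [slot_ofLp, tensorForm_eq_sum_pureTensor]
    rw [Finset.sum_comm, Finset.mul_sum]
    refine Finset.sum_congr rfl fun j _ => ?_
    simp [hessCoeff, Finset.sum_mul, mul_assoc]
  have h2 : (∑ i, y i • e i).ofLp = ∑ i, y i • (e i).ofLp := by
    simp
  rw [hessForm_eq_posPairs, h2]
  have h3 : ∀ r ∈ posPairs p, tensorForm g (slot s.ofLp r.1 r.2 (∑ i, y i • (e i).ofLp)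
      (∑ i, y i • (e i).ofLp)) = ∑ q : Fin n × Fin n, y q.1 * y q.2 *
        tensorForm g (slot s.ofLp r.1 r.2 (e q.1).ofLp (e q.2).ofLp) := by
    intro r hr
    have hr' : r.1 < r.2 := by simpa [posPairs] using hr
    rw [slot_tensorForm_sum g _ _ _ hr'.ne, Fintype.sum_prod_type]
  rw [Finset.sum_congr rfl h3, Finset.sum_comm]
  simp only [quadForm, h1]
  rw [Finset.mul_sum, Finset.mul_sum]
  refine Finset.sum_congr rfl fun q _ => ?_
  rw [← Finset.mul_sum]
  field_simp

/-- For a fixed frame, the compression of the Hessian to its orthogonal complement stays below the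
typical maximum only with probability `exp (-c N²)`. -/
lemma gaussPi_hessForm_le {p N m : ℕ} (hp : 2 ≤ p) (δ : ℝ) (hδ : 0 < δ) (hδ1 : δ ≤ 1)
    (hNm : 16 * (m : ℝ) ≤ δ * N) (hN1 : 4 * 256 ≤ δ ^ 3 * N)
    (f : Fin m → EuclideanSpace ℝ (Fin N)) (i₀ : Fin m) (hf : ‖f i₀‖ = 1) :
    gaussPi (Fin p → Fin N) {g | ∀ v : EuclideanSpace ℝ (Fin N), (∀ i, inner ℝ (f i) v = 0) →
        hessForm g (f i₀).ofLp v.ofLp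
          ≤ 2 * √((posPairs p).card : ℝ) * (√N * (√2 - δ)) * ‖v‖ ^ 2}
      ≤ ENNReal.ofReal (Real.exp (-(δ ^ 4 / 32768) * (N : ℝ) ^ 2)) := by
  have hpos : 0 < (posPairs p).card := by
    have h1 := card_posPairs p
    have h2 : (2 : ℝ) ≤ p := by exact_mod_cast hp
    have : (0 : ℝ) < (posPairs p).card := by nlinarith
    exact_mod_cast this
  have hc : (0 : ℝ) < (posPairs p).card := by exact_mod_cast hpos
  have hsq := Real.sqrt_pos.2 hc
  set K := (Submodule.span ℝ (Set.range f))ᗮ with hK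
  set n := Module.finrank ℝ K with hn
  have hdim : N ≤ n + m := by
    have h1 := (Submodule.span ℝ (Set.range f)).finrank_add_finrank_orthogonal
    have h2 : Module.finrank ℝ (Submodule.span ℝ (Set.range f)) ≤ m := by
      exact (finrank_range_le_card (R := ℝ) f).trans_eq (Fintype.card_fin m)
    rw [finrank_euclideanSpace_fin, ← hK, ← hn] at h1
    omega
  let B := stdOrthonormalBasis ℝ K
  let e : Fin n → EuclideanSpace ℝ (Fin N) := fun i => (B i : EuclideanSpace ℝ (Fin N))
  have he : Orthonormal ℝ e := B.orthonormal.comp_linearIsometry K.subtypeₗᵢ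
  have hfe : ∀ i j, inner ℝ (f i) (e j) = 0 := fun i j =>
    (Submodule.mem_orthogonal _ _).1 (B j).2 _ (Submodule.subset_span ⟨i, rfl⟩)
  have hmap := map_gaussPi_of_orthonormal _
    (orthonormal_hessCoeff hpos (f i₀) hf e he (hfe i₀))
  have hbd := gaussPi_quadForm_le_exp δ hδ hδ1 m N n hdim hNm hN1
  rw [← hmap] at hbd
  refine le_trans ?_ ((Measure.le_map_apply ?_ _).trans hbd)
  · refine measure_mono fun g hg => ?_
    intro y
    have h := hg (∑ i, y i • e i) fun i => by simp [inner_sum, inner_smul_right, hfe]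
    rw [hessForm_eq_quadForm hpos] at h
    have hnorm : ‖∑ i, y i • e i‖ ^ 2 = ‖y‖ ^ 2 := by
      rw [EuclideanSpace.real_norm_sq_eq y, ← real_inner_self_eq_norm_sq, he.inner_sum]
      simp [sq]
    rw [hnorm, mul_assoc _ _ (‖y‖ ^ 2)] at h
    exact le_of_mul_le_mul_left h (mul_pos two_pos hsq)
  · exact (measurable_pi_lambda _ fun q => Finset.measurable_sum _ fun j _ =>
      (measurable_pi_apply j).const_mul _).aemeasurable

lemma norm_slot_le {p N : ℕ} {s v : Fin N → ℝ} {r : ℝ} (hs : ‖s‖ ≤ r) (hv : ‖v‖ ≤ r)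
    (a b : Fin p) : ‖slot s a b v v‖ ≤ r := by
  refine (pi_norm_le_iff_of_nonneg ((norm_nonneg s).trans hs)).2 fun c => ?_
  rw [slot_apply]
  split_ifs <;> assumption

lemma slot_sub_slot {p N : ℕ} (s v s' v' : Fin N → ℝ) (a b : Fin p) :
    slot s a b v v - slot s' a b v' v' = slot (s - s') a b (v - v') (v - v') := by
  funext c
  simp only [Pi.sub_apply, slot_apply]
  split_ifs <;> rfl

lemma abs_hessForm_sub_le {p N : ℕ} (g : (Fin p → Fin N) → ℝ) {s s' v v' : Fin N → ℝ} {η : ℝ}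
    (hs : ‖s‖ ≤ 1) (hs' : ‖s'‖ ≤ 1) (hv : ‖v‖ ≤ 1) (hv' : ‖v'‖ ≤ 1)
    (hss : ‖s - s'‖ ≤ η) (hvv : ‖v - v'‖ ≤ η) :
    |hessForm g s v - hessForm g s' v'| ≤ (p : ℝ) ^ 3 * (∑ j, |g j|) * η := by
  have hη : 0 ≤ η := (norm_nonneg _).trans hss
  have hg : 0 ≤ ∑ j, |g j| := Finset.sum_nonneg fun _ _ => abs_nonneg _
  have key : ∀ a b : Fin p, |(if a = b then 0 else tensorForm g (slot s a b v v))
      - (if a = b then 0 else tensorForm g (slot s' a b v' v'))| ≤ p * (∑ j, |g j|) * η := by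
    intro a b
    split_ifs with h
    · simpa using by positivity
    have h1 := (tensorForm g).norm_image_sub_le_of_bound hg (abs_tensorForm_le g)
      (slot s a b v v) (slot s' a b v' v')
    rw [slot_sub_slot, Real.norm_eq_abs, Fintype.card_fin] at h1
    refine h1.trans ?_
    have h2 : max ‖slot s a b v v‖ ‖slot s' a b v' v'‖ ^ (p - 1) ≤ 1 :=
      pow_le_one₀ (le_max_of_le_left (norm_nonneg _))
        (max_le (norm_slot_le hs hv a b) (norm_slot_le hs' hv' a b))
    have h3 := norm_slot_le hss hvv a b
    calc _ ≤ (∑ j, |g j|) * p * 1 * η := by gcongr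
      _ = _ := by ring
  unfold hessForm
  simp only [← Finset.sum_sub_distrib]
  calc _ ≤ ∑ a : Fin p, ∑ b : Fin p, p * (∑ j, |g j|) * η :=
        (Finset.abs_sum_le_sum_abs _ _).trans (Finset.sum_le_sum fun a _ =>
          (Finset.abs_sum_le_sum_abs _ _).trans (Finset.sum_le_sum fun b _ => key a b))
    _ = _ := by simp; ring

lemma hessForm_smul_right {p N : ℕ} (g : (Fin p → Fin N) → ℝ) (t : ℝ) (s v : Fin N → ℝ) :
    hessForm g s (t • v) = t ^ 2 * hessForm g s v := by
  unfold hessForm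
  simp only [Finset.mul_sum]
  refine Finset.sum_congr rfl fun a _ => Finset.sum_congr rfl fun b _ => ?_
  split_ifs with h
  · simp
  · unfold slot
    rw [MultilinearMap.map_update_smul, Function.update_comm h, MultilinearMap.map_update_smul,
      Function.update_comm (Ne.symm h), smul_eq_mul, smul_eq_mul, sq, mul_assoc]

lemma norm_ofLp_le {N : ℕ} (v : EuclideanSpace ℝ (Fin N)) : ‖v.ofLp‖ ≤ ‖v‖ :=
  (pi_norm_le_iff_of_nonneg (norm_nonneg v)).2 fun i => PiLp.norm_apply_le v i

/-- The compression of the Hessian at `s` to the orthogonal complement of `u` is at most `t`. -/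
def IsBad {p N m : ℕ} (g : (Fin p → Fin N) → ℝ) (s : EuclideanSpace ℝ (Fin N))
    (u : Fin m → EuclideanSpace ℝ (Fin N)) (t : ℝ) : Prop :=
  ∀ v : EuclideanSpace ℝ (Fin N), (∀ i, inner ℝ (u i) v = 0) →
    hessForm g s.ofLp v.ofLp ≤ t * ‖v‖ ^ 2

lemma IsBad.perturb {p N m : ℕ} {g : (Fin p → Fin N) → ℝ} {s s' : EuclideanSpace ℝ (Fin N)}
    {u u' : Fin m → EuclideanSpace ℝ (Fin N)} {t η : ℝ} (h : IsBad g s u t) (ht : 0 ≤ t)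
    (hs : ‖s‖ = 1) (hs' : ‖s'‖ = 1) (hu : Orthonormal ℝ u) (hss : ‖s - s'‖ ≤ η)
    (huu : ∀ i, ‖u i - u' i‖ ≤ η) :
    IsBad g s' u' (t + (p : ℝ) ^ 3 * (∑ j, |g j|) * ((m + 1) * η)) := by
  have hη : 0 ≤ η := (norm_nonneg _).trans hss
  have unit : ∀ v' : EuclideanSpace ℝ (Fin N), ‖v'‖ = 1 → (∀ i, inner ℝ (u' i) v' = 0) →
      hessForm g s'.ofLp v'.ofLp ≤ t + (p : ℝ) ^ 3 * (∑ j, |g j|) * ((m + 1) * η) := by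
    intro v' hv' hort
    set v := v' - ∑ i, inner ℝ (u i) v' • u i with hv
    have hvu : ∀ i, inner ℝ (u i) v = 0 := fun i => by
      rw [hv, inner_sub_right, hu.inner_right_fintype, sub_self]
    have hvv : ‖v - v'‖ ≤ (m + 1) * η := by
      have h1 : v - v' = - ∑ i, inner ℝ (u i) v' • u i := by rw [hv]; abel
      rw [h1, norm_neg]
      calc _ ≤ ∑ i : Fin m, η := (norm_sum_le _ _).trans (Finset.sum_le_sum fun i _ => by
            rw [norm_smul, hu.norm_eq_one, mul_one]
            have h2 : inner ℝ (u i) v' = inner ℝ (u i - u' i) v' := by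
              rw [inner_sub_left, hort, sub_zero]
            rw [h2]
            refine (norm_inner_le_norm _ _).trans ?_
            rw [hv', mul_one]
            exact huu i)
        _ ≤ _ := by
          simp
          nlinarith
    have hvn : ‖v‖ ≤ 1 := by
      have h1 : ‖v‖ ^ 2 = inner ℝ v v' := by
        rw [← real_inner_self_eq_norm_sq]
        conv_lhs => rw [hv, inner_sub_right, ← hv, inner_sum]
        simp [inner_smul_right, real_inner_comm, hvu]
      have h2 := real_inner_le_norm v v'
      rw [hv', mul_one, ← h1] at h2
      nlinarith [norm_nonneg v]
    have h1 := h v hvu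
    have h2 := abs_hessForm_sub_le g (s := s.ofLp) (s' := s'.ofLp) (v := v.ofLp) (v' := v'.ofLp)
      (η := (m + 1) * η) ((norm_ofLp_le s).trans hs.le) ((norm_ofLp_le s').trans hs'.le)
      ((norm_ofLp_le v).trans hvn) ((norm_ofLp_le v').trans hv'.le)
      ((norm_ofLp_le (s - s')).trans (hss.trans (by nlinarith [m.cast_nonneg (α := ℝ)])))
      ((norm_ofLp_le (v - v')).trans hvv)
    have h3 : t * ‖v‖ ^ 2 ≤ t := by
      have : ‖v‖ ^ 2 ≤ 1 := pow_le_one₀ (norm_nonneg _) hvn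
      nlinarith
    linarith [(abs_le.1 h2).1]
  intro v' hort
  by_cases h0 : v' = 0
  · subst h0
    have := hessForm_smul_right g 0 s'.ofLp 0
    simp at this
    simp [this]
  · have hn : 0 < ‖v'‖ := norm_pos_iff.2 h0
    have h1 := unit (‖v'‖⁻¹ • v') (by rw [norm_smul]; simp [hn.ne'])
      (fun i => by rw [inner_smul_right, hort, mul_zero])
    rw [WithLp.ofLp_smul, hessForm_smul_right, inv_pow, inv_mul_le_iff₀ (by positivity)] at h1
    linarith

/-- The cell of a number in `[-1, 1]`, for the subdivision in intervals of length `1 / M`. -/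
def cell (M : ℕ) (x : ℝ) : Fin (2 * M + 1) :=
  Fin.ofNat (2 * M + 1) ⌊(x + 1) * M⌋₊

lemma abs_sub_le_of_cell_eq {M : ℕ} (hM : 0 < M) {x y : ℝ} (hx : |x| ≤ 1) (hy : |y| ≤ 1)
    (h : cell M x = cell M y) : |x - y| ≤ 1 / M := by
  have hM' : (0 : ℝ) < M := by exact_mod_cast hM
  have bound : ∀ z : ℝ, |z| ≤ 1 → 0 ≤ (z + 1) * M ∧ ⌊(z + 1) * M⌋₊ < 2 * M + 1 := by
    intro z hz
    obtain ⟨h1, h2⟩ := abs_le.1 hz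
    refine ⟨mul_nonneg (by linarith) hM'.le, ?_⟩
    rw [Nat.lt_succ_iff]
    apply Nat.floor_le_of_le
    push_cast
    nlinarith
  have hfl : ⌊(x + 1) * M⌋₊ = ⌊(y + 1) * M⌋₊ := by
    have := congrArg Fin.val h
    simpa [cell, Fin.ofNat, Nat.mod_eq_of_lt (bound x hx).2, Nat.mod_eq_of_lt (bound y hy).2]
      using this
  have hx1 := Nat.floor_le (bound x hx).1
  have hx2 := Nat.lt_floor_add_one ((x + 1) * M)
  have hy1 := Nat.floor_le (bound y hy).1
  have hy2 := Nat.lt_floor_add_one ((y + 1) * M)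
  rw [hfl] at hx1 hx2
  rw [le_div_iff₀ hM', ← abs_of_pos hM', ← abs_mul, abs_le]
  constructor <;> linarith

lemma norm_sub_le_of_cell_eq {N M : ℕ} (hM : 0 < M) {x y : EuclideanSpace ℝ (Fin N)}
    (hx : ‖x‖ ≤ 1) (hy : ‖y‖ ≤ 1) (h : ∀ i, cell M (x i) = cell M (y i)) :
    ‖x - y‖ ≤ N / M := by
  have hM' : (0 : ℝ) < M := by exact_mod_cast hM
  have h1 : ∀ i, |x i - y i| ≤ 1 / M := fun i => abs_sub_le_of_cell_eq hM
    ((PiLp.norm_apply_le x i).trans hx) ((PiLp.norm_apply_le y i).trans hy) (h i)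
  refine le_of_sq_le_sq ?_ (by positivity)
  rw [EuclideanSpace.real_norm_sq_eq]
  calc _ ≤ ∑ i : Fin N, (1 / (M : ℝ)) ^ 2 := Finset.sum_le_sum fun i _ => by
        rw [← sq_abs]
        exact pow_le_pow_left₀ (abs_nonneg _) (h1 i) 2
    _ = N * (1 / (M : ℝ)) ^ 2 := by simp
    _ ≤ N ^ 2 * (1 / (M : ℝ)) ^ 2 := by
        gcongr
        exact_mod_cast Nat.le_self_pow two_ne_zero N
    _ = _ := by ring

lemma gaussPi_exists_isBad_le {p N m M : ℕ} (hp : 2 ≤ p) (δ : ℝ) (hδ : 0 < δ)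
    (hδ2 : 2 * δ ≤ 1) (hNm : 16 * ((m : ℝ) + 1) ≤ δ * N) (hN1 : 4 * 256 ≤ δ ^ 3 * N)
    (hM : 0 < M) {R : ℝ} (hR : (p : ℝ) ^ 3 * R * ((m + 1) * (N / M))
      ≤ 2 * √((posPairs p).card : ℝ) * (√N * δ)) :
    gaussPi (Fin p → Fin N) {g | ∑ j, |g j| ≤ R ∧ ∃ (s : EuclideanSpace ℝ (Fin N))
        (u : Fin m → EuclideanSpace ℝ (Fin N)), ‖s‖ = 1 ∧ Orthonormal ℝ u ∧
        IsBad g s u (2 * √((posPairs p).card : ℝ) * (√N * (√2 - 2 * δ)))}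
      ≤ ((2 * M + 1) ^ (N * (m + 1)) : ℕ) *
        ENNReal.ofReal (Real.exp (-(δ ^ 4 / 32768) * (N : ℝ) ^ 2)) := by
  have h2 : 1 ≤ √2 := by rw [Real.one_le_sqrt]; norm_num
  set t := 2 * √((posPairs p).card : ℝ) * (√N * (√2 - 2 * δ)) with ht
  have ht0 : 0 ≤ t := by
    have : 0 ≤ √2 - 2 * δ := by linarith
    positivity
  let code : EuclideanSpace ℝ (Fin N) → (Fin m → EuclideanSpace ℝ (Fin N)) →
      Fin (m + 1) → Fin N → Fin (2 * M + 1) :=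
    fun s u i j => cell M (Fin.cons (α := fun _ => EuclideanSpace ℝ (Fin N)) s u i j)
  let S : (Fin (m + 1) → Fin N → Fin (2 * M + 1)) → Set ((Fin p → Fin N) → ℝ) := fun c =>
    {g | ∑ j, |g j| ≤ R ∧ ∃ (s : EuclideanSpace ℝ (Fin N))
        (u : Fin m → EuclideanSpace ℝ (Fin N)), ‖s‖ = 1 ∧ Orthonormal ℝ u ∧ IsBad g s u t ∧
        code s u = c}
  have hS : ∀ c, gaussPi (Fin p → Fin N) (S c)
      ≤ ENNReal.ofReal (Real.exp (-(δ ^ 4 / 32768) * (N : ℝ) ^ 2)) := by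
    intro c
    by_cases hc : ∃ (s : EuclideanSpace ℝ (Fin N)) (u : Fin m → EuclideanSpace ℝ (Fin N)),
        ‖s‖ = 1 ∧ Orthonormal ℝ u ∧ code s u = c
    · obtain ⟨s', u', hs', hu', hc'⟩ := hc
      refine le_trans (measure_mono ?_) (gaussPi_hessForm_le (m := m + 1) hp δ hδ (by linarith)
        (by push_cast; exact hNm) hN1
        (Fin.cons (α := fun _ => EuclideanSpace ℝ (Fin N)) s' u') 0 hs')
      rintro g ⟨hgR, s, u, hs, hu, hbad, hcode⟩ v hv
      have hcell : ∀ i j, cell M (Fin.cons (α := fun _ => EuclideanSpace ℝ (Fin N)) s u i j)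
          = cell M (Fin.cons (α := fun _ => EuclideanSpace ℝ (Fin N)) s' u' i j) := fun i j =>
        congrFun (congrFun (hcode.trans hc'.symm) i) j
      have hss : ‖s - s'‖ ≤ N / M :=
        norm_sub_le_of_cell_eq hM hs.le hs'.le fun j => hcell 0 j
      have huu : ∀ i, ‖u i - u' i‖ ≤ N / M := fun i =>
        norm_sub_le_of_cell_eq hM (hu.norm_eq_one i).le (hu'.norm_eq_one i).le
          fun j => hcell i.succ j
      refine (hbad.perturb ht0 hs hs' hu hss huu v fun i => hv i.succ).trans ?_
      gcongr
      have : (p : ℝ) ^ 3 * (∑ j, |g j|) * ((m + 1) * (N / M))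
          ≤ (p : ℝ) ^ 3 * R * ((m + 1) * (N / M)) := by gcongr
      rw [ht]
      linarith
    · have : S c = ∅ := by
        refine Set.eq_empty_of_forall_notMem ?_
        rintro g ⟨-, s, u, hs, hu, -, hcode⟩
        exact hc ⟨s, u, hs, hu, hcode⟩
      rw [this, measure_empty]
      exact zero_le
  calc _ ≤ gaussPi (Fin p → Fin N) (⋃ c, S c) := by
        refine measure_mono ?_
        rintro g ⟨hgR, s, u, hs, hu, hbad⟩
        exact Set.mem_iUnion.2 ⟨code s u, hgR, s, u, hs, hu, hbad, rfl⟩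
    _ ≤ ∑ c, gaussPi (Fin p → Fin N) (S c) := measure_iUnion_fintype_le _ _
    _ ≤ ∑ _c : Fin (m + 1) → Fin N → Fin (2 * M + 1),
        ENNReal.ofReal (Real.exp (-(δ ^ 4 / 32768) * (N : ℝ) ^ 2)) :=
      Finset.sum_le_sum fun c _ => hS c
    _ = _ := by
      rw [Finset.sum_const, nsmul_eq_mul, Finset.card_univ]
      simp [pow_mul]

lemma exists_negDef_of_critIndex {N P : ℕ} {c : ℕ → ℝ} {g : (k : ℕ) → (Fin k → Fin N) → ℝ}
    {σ : Fin N → ℝ} {d : ℕ} (h : critIndex N P c g σ = d) :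
    ∃ W : Submodule ℝ (Fin N → ℝ), Module.finrank ℝ W = d ∧ ∀ v ∈ W, v ≠ 0 →
      hessH N P c g σ v v - (dotp (gradH N P c g σ) σ / N) * ∑ i, (v i) ^ 2 < 0 := by
  rw [critIndex] at h
  have hmem := Nat.sSup_mem (s := {d : ℕ | ∃ W : Submodule ℝ (Fin N → ℝ),
    Module.finrank ℝ W = d ∧ (∀ v ∈ W, dotp v σ = 0) ∧ ∀ v ∈ W, v ≠ 0 →
      hessH N P c g σ v v - (dotp (gradH N P c g σ) σ / N) * ∑ i, (v i) ^ 2 < 0})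
    ⟨0, ⊥, finrank_bot ℝ _, by simp [dotp], by simp⟩
    ⟨N, by
      rintro _ ⟨W, rfl, -⟩
      simpa using W.finrank_le⟩
  rw [h] at hmem
  obtain ⟨W, hW, -, hneg⟩ := hmem
  exact ⟨W, hW, hneg⟩

lemma exists_orthonormal_of_finrank {N m : ℕ} (W : Submodule ℝ (Fin N → ℝ))
    (hW : Module.finrank ℝ W + m = N) :
    ∃ u : Fin m → EuclideanSpace ℝ (Fin N), Orthonormal ℝ u ∧
      ∀ v : EuclideanSpace ℝ (Fin N), (∀ i, inner ℝ (u i) v = 0) → v.ofLp ∈ W := by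
  let e := WithLp.linearEquiv 2 ℝ (Fin N → ℝ)
  let W' : Submodule ℝ (EuclideanSpace ℝ (Fin N)) := W.map e.symm.toLinearMap
  have hW' : Module.finrank ℝ W' = Module.finrank ℝ W := LinearEquiv.finrank_map_eq e.symm W
  have hm : Module.finrank ℝ W'ᗮ = m := by
    have := W'.finrank_add_finrank_orthogonal
    rw [finrank_euclideanSpace_fin] at this
    omega
  let B := (stdOrthonormalBasis ℝ W'ᗮ).reindex (finCongr hm)
  refine ⟨fun i => (B i : EuclideanSpace ℝ (Fin N)),
    B.orthonormal.comp_linearIsometry W'ᗮ.subtypeₗᵢ, fun v hv => ?_⟩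
  have h1 : v ∈ W'ᗮᗮ := by
    rw [Submodule.mem_orthogonal]
    intro x hx
    have h2 := B.sum_repr ⟨x, hx⟩
    have h3 : x = ∑ i, B.repr ⟨x, hx⟩ i • (B i : EuclideanSpace ℝ (Fin N)) := by
      have := congrArg (Subtype.val) h2
      simpa using this.symm
    rw [h3, sum_inner]
    exact Finset.sum_eq_zero fun i _ => by rw [inner_smul_left, hv, mul_zero]
  rw [Submodule.orthogonal_orthogonal] at h1
  obtain ⟨w, hw, rfl⟩ := h1
  exact hw

lemma mul_THRp {p : ℕ} (hp : 2 ≤ p) :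
    (p : ℝ) * THRp p = 2 * √((posPairs p).card : ℝ) * √2 := by
  have hp' : (2 : ℝ) ≤ p := by exact_mod_cast hp
  have h1 := card_posPairs p
  have h2 : (posPairs p).card * 2 = (p : ℝ) ^ 2 * (((p : ℝ) - 1) / p) := by
    rw [mul_comm, h1]
    field_simp
  rw [mul_assoc, ← Real.sqrt_mul (Nat.cast_nonneg _), h2, Real.sqrt_mul (sq_nonneg _),
    Real.sqrt_sq (by linarith), THRp]
  ring

lemma mul_THRp_sub_le {p : ℕ} (hp : 2 ≤ p) {ε δ : ℝ} (hδ : 0 < δ) (hδε : 4 * δ ≤ ε) :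
    (p : ℝ) * (THRp p - ε) ≤ 2 * √((posPairs p).card : ℝ) * (√2 - 2 * δ) := by
  have hp' : (2 : ℝ) ≤ p := by exact_mod_cast hp
  have h1 := mul_THRp hp
  have h2 : √((posPairs p).card : ℝ) ≤ p := by
    rw [Real.sqrt_le_left (by linarith)]
    nlinarith [card_posPairs p]
  nlinarith [mul_le_mul_of_nonneg_left h2 hδ.le]

lemma exists_isBad {p N k : ℕ} (hp : 2 ≤ p) (hN : k + 2 ≤ N) {ε δ : ℝ} (hδ : 0 < δ)
    (hδε : 4 * δ ≤ ε) {g : (k : ℕ) → (Fin k → Fin N) → ℝ} {σ : Fin N → ℝ}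
    (hσ : σ ∈ sphereSet N) (hidx : critIndex N p (pureC p) g σ = N - 1 - k)
    (hH : hamiltonian N p (pureC p) g σ ≤ (N : ℝ) * (THRp p - ε)) :
    ∃ (s : EuclideanSpace ℝ (Fin N)) (u : Fin (k + 1) → EuclideanSpace ℝ (Fin N)),
      ‖s‖ = 1 ∧ Orthonormal ℝ u ∧
      IsBad (g p) s u (2 * √((posPairs p).card : ℝ) * (√N * (√2 - 2 * δ))) := by
  have hN0 : (0 : ℝ) < N := by exact_mod_cast (by omega : 0 < N)
  have hsN := Real.sqrt_pos.2 hN0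
  obtain ⟨W, hW, hneg⟩ := exists_negDef_of_critIndex hidx
  obtain ⟨u, hu, huW⟩ := exists_orthonormal_of_finrank (m := k + 1) W (by omega)
  refine ⟨WithLp.toLp 2 ((√N)⁻¹ • σ), u, ?_, hu, fun v hv => ?_⟩
  · have h1 : ‖(WithLp.toLp 2 ((√N)⁻¹ • σ) : EuclideanSpace ℝ (Fin N))‖ ^ 2 = 1 := by
      rw [EuclideanSpace.real_norm_sq_eq]
      simp only [Pi.smul_apply, smul_eq_mul, mul_pow]
      rw [← Finset.mul_sum, show ∑ i, σ i ^ 2 = (N : ℝ) from hσ, inv_pow, Real.sq_sqrt hN0.le,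
        inv_mul_cancel₀ hN0.ne']
    exact (pow_eq_one_iff_of_nonneg (norm_nonneg _) two_ne_zero).1 h1
  · have hvn : ‖v‖ ^ 2 = ∑ i, v i ^ 2 := EuclideanSpace.real_norm_sq_eq v
    have key : hessForm (g p) σ v.ofLp * (N : ℝ) ^ (-(((p : ℝ) - 1) / 2))
        ≤ p * (THRp p - ε) * ‖v‖ ^ 2 := by
      by_cases h0 : v.ofLp = 0
      · have h1 := hessForm_smul_right (g p) 0 σ 0
        simp only [smul_zero, ne_eq, OfNat.ofNat_ne_zero, not_false_eq_true, zero_pow,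
          zero_mul] at h1
        rw [hvn, h0, h1]
        simp
      · have h1 := hneg v.ofLp (huW v hv) h0
        rw [hessH_pure hp, dotp_gradH_pure hp, ← hvn] at h1
        have h2 : p * hamiltonian N p (pureC p) g σ / N ≤ p * (THRp p - ε) := by
          rw [div_le_iff₀ hN0]
          calc _ ≤ (p : ℝ) * (N * (THRp p - ε)) := by gcongr
            _ = _ := by ring
        nlinarith [mul_le_mul_of_nonneg_right h2 (sq_nonneg ‖v‖)]
    have hσs : σ = √N • ((√N)⁻¹ • σ) := by
      rw [smul_smul, mul_inv_cancel₀ hsN.ne', one_smul]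
    rw [hσs, hessForm_smul] at key
    have hpow : (√N) ^ (p - 2) * (N : ℝ) ^ (-(((p : ℝ) - 1) / 2)) = (√N)⁻¹ := by
      rw [Real.sqrt_eq_rpow, ← Real.rpow_natCast, ← Real.rpow_mul hN0.le,
        ← Real.rpow_add hN0, ← Real.rpow_neg hN0.le, Nat.cast_sub hp]
      congr 1
      push_cast
      ring
    rw [mul_right_comm, hpow, inv_mul_le_iff₀ hsN] at key
    calc _ ≤ _ := key
      _ ≤ √N * ((2 * √((posPairs p).card : ℝ) * (√2 - 2 * δ)) * ‖v‖ ^ 2) := by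
        exact mul_le_mul_of_nonneg_left (mul_le_mul_of_nonneg_right (mul_THRp_sub_le hp hδ hδε)
          (sq_nonneg _)) hsN.le
      _ = _ := by ring

lemma gaussPi_sum_abs_gt_le (ι : Type*) [Fintype ι] :
    gaussPi ι {g | 3 * (Fintype.card ι : ℝ) < ∑ j, |g j|}
      ≤ ENNReal.ofReal (Real.exp (-(Fintype.card ι : ℝ) / 2)) := by
  set D := Fintype.card ι with hD
  have hlap := lintegral_exp_neg_sum_sq ι (-(1 / 4)) (by norm_num)
  have hmeas : Measurable fun x : ι → ℝ =>
      ENNReal.ofReal (Real.exp (-(-(1 / 4)) * ∑ i, x i ^ 2)) := by fun_prop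
  have hmk := mul_meas_ge_le_lintegral (μ := gaussPi ι) hmeas (ENNReal.ofReal (Real.exp D))
  rw [hlap] at hmk
  set A := {x : ι → ℝ | ENNReal.ofReal (Real.exp D)
    ≤ ENNReal.ofReal (Real.exp (-(-(1 / 4)) * ∑ i, x i ^ 2))}
  have hsub : {g : ι → ℝ | 3 * (D : ℝ) < ∑ j, |g j|} ⊆ A := by
    intro g hg
    apply ENNReal.ofReal_le_ofReal
    apply Real.exp_le_exp.2
    have h1 : ∑ j, |g j| ≤ ∑ j, (1 + g j ^ 2) / 2 := Finset.sum_le_sum fun j _ => by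
      nlinarith [sq_nonneg (|g j| - 1), sq_abs (g j)]
    rw [← Finset.sum_div, Finset.sum_add_distrib] at h1
    simp only [Finset.sum_const, Finset.card_univ, nsmul_eq_mul, mul_one] at h1
    have h2 : 3 * (D : ℝ) < ∑ j, |g j| := hg
    rw [← hD] at h1
    have h3 : (0 : ℝ) ≤ D := Nat.cast_nonneg _
    linarith
  have hexp : Real.exp (-(D : ℝ) / 2)
      = Real.exp (-D) * Real.exp (1 / 2) ^ D := by
    rw [← Real.exp_nat_mul, ← Real.exp_add]
    congr 1
    ring
  have hbase : (√(1 + 2 * -(1 / 4)))⁻¹ ≤ Real.exp (1 / 2) := by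
    have h1 : (1 : ℝ) / 2 + 1 ≤ Real.exp (1 / 2) := Real.add_one_le_exp _
    have h2 : (2 : ℝ) / 3 ≤ √(1 + 2 * -(1 / 4)) := by
      rw [Real.le_sqrt' (by norm_num)]
      norm_num
    calc _ ≤ ((2 : ℝ) / 3)⁻¹ := inv_anti₀ (by norm_num) h2
      _ ≤ _ := by norm_num at h1 ⊢; linarith
  calc _ ≤ gaussPi ι A := measure_mono hsub
    _ = ENNReal.ofReal (Real.exp (-D)) * (ENNReal.ofReal (Real.exp D) * gaussPi ι A) := by
      rw [← mul_assoc, ← ENNReal.ofReal_mul (Real.exp_pos _).le, ← Real.exp_add]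
      simp
    _ ≤ ENNReal.ofReal (Real.exp (-D)) * ENNReal.ofReal ((√(1 + 2 * -(1 / 4)))⁻¹ ^ D) := by
      gcongr
    _ ≤ _ := by
      rw [← ENNReal.ofReal_mul (Real.exp_pos _).le, hexp]
      gcongr

lemma measure_pure_coupling_le {Ω : Type*} [MeasureSpace Ω] {N p : ℕ} (hp : 2 ≤ p)
    {G : Ω → (k : ℕ) → (Fin k → Fin N) → ℝ} (hG : StdGaussianCouplings N p G)
    (T : Set ((Fin p → Fin N) → ℝ)) :
    ℙ {ω | G ω p ∈ T} ≤ gaussPi (Fin p → Fin N) T := by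
  have hG' : Measure.map (fun ω => flatten N p (G ω)) ℙ = gaussPi (GIdx N p) := hG
  have hae : AEMeasurable (fun ω => flatten N p (G ω)) (ℙ : Measure Ω) := by
    by_contra h
    rw [Measure.map_of_not_aemeasurable h] at hG'
    exact IsProbabilityMeasure.ne_zero (gaussPi (GIdx N p)) hG'.symm
  let emb : (Fin p → Fin N) → GIdx N p := fun j => ⟨⟨p, Finset.mem_Icc.2 ⟨hp, le_rfl⟩⟩, j⟩
  have hemb : Function.Injective emb := fun i j h => by simpa [emb] using h
  have horth : Orthonormal ℝ fun j => EuclideanSpace.single (emb j) (1 : ℝ) :=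
    (EuclideanSpace.orthonormal_single (𝕜 := ℝ) (ι := GIdx N p)).comp emb hemb
  have hmap := map_gaussPi_of_orthonormal _ horth
  have hfun : (fun (x : GIdx N p → ℝ) i =>
      ∑ l, (EuclideanSpace.single (emb i) (1 : ℝ)).ofLp l * x l) = fun x i => x (emb i) := by
    funext x i
    simp
  rw [hfun] at hmap
  calc ℙ {ω | G ω p ∈ T} = ℙ ((fun ω => flatten N p (G ω)) ⁻¹' {x | (fun i => x (emb i)) ∈ T}) :=
        rfl
    _ ≤ Measure.map (fun ω => flatten N p (G ω)) ℙ {x | (fun i => x (emb i)) ∈ T} :=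
      Measure.le_map_apply hae _
    _ = gaussPi (GIdx N p) ((fun x i => x (emb i)) ⁻¹' T) := by rw [hG']; rfl
    _ ≤ Measure.map (fun x i => x (emb i)) (gaussPi (GIdx N p)) T :=
      Measure.le_map_apply
        (measurable_pi_lambda _ fun i => measurable_pi_apply (emb i)).aemeasurable _
    _ = _ := by rw [hmap]

lemma eventually_pow_mul_exp_le {c : ℝ} (hc : 0 < c) (a b : ℕ) :
    ∀ᶠ N : ℕ in atTop, (2 * (N : ℝ) ^ a + 1) ^ (N * b) * Real.exp (-c * (N : ℝ) ^ 2)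
      ≤ Real.exp (-(N : ℝ) / 2) := by
  set c' := c / (2 * ((a + 2) * (b + 1))) with hc'
  have hc'0 : 0 < c' := by positivity
  have hlog : ∀ᶠ N : ℕ in atTop, Real.log N ≤ c' * N := by
    have h := tendsto_natCast_atTop_atTop.eventually
      (Real.isLittleO_log_id_atTop.bound hc'0)
    filter_upwards [h] with N hN
    simpa using (le_abs_self _).trans hN
  have hlin : ∀ᶠ N : ℕ in atTop, 1 ≤ c * (N : ℝ) :=
    (tendsto_natCast_atTop_atTop.const_mul_atTop hc).eventually_ge_atTop 1
  filter_upwards [hlog, hlin, eventually_ge_atTop 2] with N h1 h2 h3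
  have hN : (2 : ℝ) ≤ N := by exact_mod_cast h3
  have hN0 : (0 : ℝ) < N := by linarith
  have hbase : 2 * (N : ℝ) ^ a + 1 ≤ Real.exp ((a + 2) * (c' * N)) := by
    calc 2 * (N : ℝ) ^ a + 1 ≤ (N : ℝ) ^ (a + 2) := by
          rw [pow_add]
          have : (1 : ℝ) ≤ (N : ℝ) ^ a := one_le_pow₀ (by linarith)
          have h4 : (4 : ℝ) ≤ (N : ℝ) ^ 2 := by nlinarith
          nlinarith [mul_le_mul_of_nonneg_left h4 (zero_le_one.trans this)]
      _ = Real.exp ((a + 2) * Real.log N) := by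
          rw [← Real.exp_log hN0, ← Real.exp_nat_mul, Real.log_exp]
          push_cast
          rfl
      _ ≤ _ := by gcongr
  calc _ ≤ Real.exp ((a + 2) * (c' * N)) ^ (N * b) * Real.exp (-c * (N : ℝ) ^ 2) := by
        gcongr
    _ = Real.exp ((N * b) * ((a + 2) * (c' * N)) - c * (N : ℝ) ^ 2) := by
        rw [← Real.exp_nat_mul, ← Real.exp_add]
        push_cast
        congr 1
        ring
    _ ≤ _ := by
        apply Real.exp_le_exp.2
        have h4 : (b : ℝ) * ((a + 2) * c') ≤ c / 2 := by
          rw [hc', mul_div_assoc', mul_div_assoc', div_le_div_iff₀ (by positivity) two_pos]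
          nlinarith [mul_pos hc (by positivity : (0 : ℝ) < a + 2)]
        have h5 := mul_le_mul_of_nonneg_right h4 (sq_nonneg (N : ℝ))
        nlinarith

/-- in the pure p-spin spherical model, for every fixed `k` and `ε > 0`, with
probability at least `1 - exp(-c_k N)` there is no critical point of index `N-1-k` at energy
below `N(THR - ε)`. -/
theorem statement_9 {Ω : Type*} [MeasureSpace Ω] [IsProbabilityMeasure (ℙ : Measure Ω)]
    (p : ℕ) (hp : 3 ≤ p)
    (G : (N : ℕ) → Ω → (k : ℕ) → (Fin k → Fin N) → ℝ)
    (hG : ∀ N, 1 ≤ N → StdGaussianCouplings N p (G N))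
    (k : ℕ) (ε : ℝ) (hε : 0 < ε) :
    ∃ ck > (0 : ℝ), ∃ N₀ : ℕ, ∀ N ≥ N₀,
      ℙ {ω | ∃ σ : Fin N → ℝ, IsCritPt N p (pureC p) (G N ω) σ
          ∧ critIndex N p (pureC p) (G N ω) σ = N - 1 - k
          ∧ hamiltonian N p (pureC p) (G N ω) σ ≤ (N : ℝ) * (THRp p - ε)}
        ≤ ENNReal.ofReal (Real.exp (-ck * N)) := by
  have hp2 : 2 ≤ p := by omega
  obtain ⟨δ, hδ, hδ2, hδε⟩ : ∃ δ : ℝ, 0 < δ ∧ 2 * δ ≤ 1 ∧ 4 * δ ≤ ε :=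
    ⟨min (1 / 2) (ε / 4), by positivity, by linarith [min_le_left (1 / 2) (ε / 4)],
      by linarith [min_le_right (1 / 2) (ε / 4)]⟩
  have hlarge : ∀ {a : ℝ}, 0 < a → ∀ b : ℝ, ∀ᶠ N : ℕ in atTop, b ≤ a * N := fun ha b =>
    (tendsto_natCast_atTop_atTop.const_mul_atTop ha).eventually_ge_atTop b
  refine ⟨1 / 4, by norm_num, eventually_atTop.1 ?_⟩
  filter_upwards [eventually_ge_atTop (k + 4), hlarge hδ (16 * ((k + 1 : ℕ) + 1)),
    hlarge (pow_pos hδ 3) (4 * 256), hlarge hδ (3 * (p : ℝ) ^ 3 * ((k + 1 : ℕ) + 1)),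
    eventually_pow_mul_exp_le (c := δ ^ 4 / 32768) (by positivity) (p + 2) (k + 1 + 1)]
    with N hNk hN16 hN1 hNR hNexp
  have hN4 : (4 : ℝ) ≤ N := by exact_mod_cast (by omega : 4 ≤ N)
  have hN0 : (0 : ℝ) < N := by linarith
  have hcard : (1 : ℝ) ≤ (posPairs p).card := by
    have h1 : (3 : ℝ) ≤ p := by exact_mod_cast hp
    nlinarith [card_posPairs p]
  have hR : (p : ℝ) ^ 3 * (3 * (N : ℝ) ^ p) * (((k + 1 : ℕ) + 1) * (N / (N ^ (p + 2) : ℕ)))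
      ≤ 2 * √((posPairs p).card : ℝ) * (√N * δ) := by
    have h1 : 1 ≤ √((posPairs p).card : ℝ) := Real.one_le_sqrt.2 hcard
    have h2 : 1 ≤ √(N : ℝ) := Real.one_le_sqrt.2 (by linarith)
    calc _ = 3 * (p : ℝ) ^ 3 * ((k + 1 : ℕ) + 1) / N := by
          push_cast
          field_simp
          ring
      _ ≤ δ := by rwa [div_le_iff₀ hN0]
      _ = 1 * 1 * (1 * δ) := by ring
      _ ≤ _ := by gcongr; norm_num
  have hcardN : (Fintype.card (Fin p → Fin N) : ℝ) = (N : ℝ) ^ p := by simp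
  have htail := gaussPi_sum_abs_gt_le (Fin p → Fin N)
  have hnet := gaussPi_exists_isBad_le (M := N ^ (p + 2)) hp2 δ hδ hδ2 hN16 hN1
    (pow_pos (by omega) _) hR
  rw [hcardN] at htail
  set T₁ := {g : (Fin p → Fin N) → ℝ | 3 * (N : ℝ) ^ p < ∑ j, |g j|}
  set T₂ := {g : (Fin p → Fin N) → ℝ | ∑ j, |g j| ≤ 3 * (N : ℝ) ^ p ∧
    ∃ (s : EuclideanSpace ℝ (Fin N)) (u : Fin (k + 1) → EuclideanSpace ℝ (Fin N)),
      ‖s‖ = 1 ∧ Orthonormal ℝ u ∧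
      IsBad g s u (2 * √((posPairs p).card : ℝ) * (√N * (√2 - 2 * δ)))}
  calc _ ≤ ℙ {ω | G N ω p ∈ T₁ ∪ T₂} := by
        refine measure_mono ?_
        rintro ω ⟨σ, hσ, hidx, hH⟩
        by_cases h : 3 * (N : ℝ) ^ p < ∑ j, |G N ω p j|
        · exact Or.inl h
        · exact Or.inr ⟨not_lt.1 h, exists_isBad hp2 (by omega) hδ hδε hσ.1 hidx hH⟩
    _ ≤ gaussPi _ T₁ + gaussPi _ T₂ :=
      (measure_pure_coupling_le hp2 (hG N (by omega)) _).trans (measure_union_le _ _)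
    _ ≤ ENNReal.ofReal (Real.exp (-(N : ℝ) / 2)) + ENNReal.ofReal (Real.exp (-(N : ℝ) / 2)) := by
      refine add_le_add (htail.trans (ENNReal.ofReal_le_ofReal (Real.exp_le_exp.2 ?_)))
        (hnet.trans ?_)
      · have : (N : ℝ) ≤ (N : ℝ) ^ p := le_self_pow₀ (by linarith) (by omega)
        linarith
      · rw [← ENNReal.ofReal_natCast, ← ENNReal.ofReal_mul (Nat.cast_nonneg _)]
        refine ENNReal.ofReal_le_ofReal ?_
        push_cast at hNexp ⊢
        exact hNexp
    _ ≤ _ := by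
      rw [← ENNReal.ofReal_add (Real.exp_pos _).le (Real.exp_pos _).le, ← two_mul]
      refine ENNReal.ofReal_le_ofReal ?_
      have h1 : 2 ≤ Real.exp ((N : ℝ) / 4) := by
        linarith [Real.add_one_le_exp ((N : ℝ) / 4)]
      have h2 : Real.exp (-(1 / 4) * (N : ℝ))
          = Real.exp ((N : ℝ) / 4) * Real.exp (-(N : ℝ) / 2) := by
        rw [← Real.exp_add]
        congr 1
        ring
      rw [h2]
      gcongr
end
end

section
/- Fix N ≥ 1, q ∈ [0,1], and m ∈ ℝ^N with ‖m‖₂² = N q. Define the Taylor remainder H_N^m(v) := H_N(m + v) − H_N(m) − ⟨∇H_N(m), v⟩ for v ∈ ℝ^N. Then for all v¹, v² ∈ ℝ^N with ⟨v¹, m⟩ = ⟨v², m⟩ = 0, the random variable H_N^m(v) is centered Gaussian and E[ H_N^m(v¹) H_N^m(v²) ] = N ( ξ( q + ⟨v¹, v²⟩/N ) − ξ(q) − ξ'(q) ⟨v¹, v²⟩/N ). -/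
open MeasureTheory ProbabilityTheory Filter
open scoped ENNReal NNReal

noncomputable section

lemma integral_eval_pi_gaussianReal {ι : Type*} [Fintype ι] (i : ι) :
    ∫ g : ι → ℝ, g i ∂(Measure.pi fun _ : ι => gaussianReal 0 1) = 0 := by
  rw [integral_comp_eval (μ := fun _ : ι => gaussianReal 0 1) (i := i)
    (f := fun x : ℝ => x) (by fun_prop)]
  simp

/-- A linear combination of i.i.d. standard Gaussians is a centered Gaussian. -/
lemma map_sum_mul_pi_gaussianReal {ι : Type*} [Fintype ι] (a : ι → ℝ) :
    ∃ var : ℝ≥0, Measure.map (fun g : ι → ℝ => ∑ i, g i * a i)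
      (Measure.pi fun _ : ι => gaussianReal 0 1) = gaussianReal 0 var := by
  have hind : iIndepFun (fun i (g : ι → ℝ) => g i)
      (Measure.pi fun _ : ι => gaussianReal 0 1) :=
    iIndepFun_pi (X := fun _ => id) fun _ => aemeasurable_id
  have hlaw (i : ι) : HasGaussianLaw (fun g : ι → ℝ => g i)
      (Measure.pi fun _ : ι => gaussianReal 0 1) := by
    refine ⟨?_⟩
    rw [(measurePreserving_eval _ i).map_eq]
    infer_instance
  have h := hind.hasGaussianLaw hlaw
  have hsum : HasGaussianLaw (fun g : ι → ℝ => ∑ i, g i * a i)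
      (Measure.pi fun _ : ι => gaussianReal 0 1) := by
    have := h.map_fun (∑ i, a i • ContinuousLinearMap.proj (R := ℝ) (φ := fun _ : ι => ℝ) i)
    simpa [mul_comm] using this
  refine ⟨_, hsum.map_eq_gaussianReal.trans (congrArg (gaussianReal · _) ?_)⟩
  rw [integral_finsetSum _ fun i _ => (hlaw i).integrable.mul_const _]
  refine Finset.sum_eq_zero fun i _ => ?_
  rw [integral_mul_const, integral_eval_pi_gaussianReal, zero_mul]

/-- The covariance of two linear combinations of i.i.d. standard Gaussians. -/
lemma integral_sum_mul_sum_pi_gaussianReal {ι : Type*} [Fintype ι] (a b : ι → ℝ) :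
    ∫ g : ι → ℝ, (∑ i, g i * a i) * (∑ i, g i * b i)
      ∂(Measure.pi fun _ : ι => gaussianReal 0 1) = ∑ i, a i * b i := by
  classical
  have hL (i : ι) : MemLp (fun g : ι → ℝ => g i) 2
      (Measure.pi fun _ : ι => gaussianReal 0 1) :=
    (memLp_id_gaussianReal 2).comp_measurePreserving (measurePreserving_eval _ i)
  have hint (i j : ι) : Integrable (fun g : ι → ℝ => g i * g j)
      (Measure.pi fun _ : ι => gaussianReal 0 1) := (hL i).integrable_mul (hL j)
  have hcov (i j : ι) : ∫ g : ι → ℝ, g i * g j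
      ∂(Measure.pi fun _ : ι => gaussianReal 0 1) = if i = j then 1 else 0 := by
    split_ifs with hij
    · subst hij
      rw [integral_comp_eval (μ := fun _ : ι => gaussianReal 0 1) (i := i)
        (f := fun x : ℝ => x * x) (by fun_prop)]
      have := variance_eq_sub (memLp_id_gaussianReal (μ := 0) (v := 1) 2)
      simpa [sq, eq_comm] using this
    · have hind := (iIndepFun_pi (μ := fun _ : ι => gaussianReal 0 1) (X := fun _ => id)
        fun _ => aemeasurable_id).indepFun hij
      have := hind.integral_fun_mul_eq_mul_integral (hL i).aestronglyMeasurable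
        (hL j).aestronglyMeasurable
      simp only [id] at this
      rw [this, integral_eval_pi_gaussianReal, zero_mul]
  have hexp (g : ι → ℝ) : (∑ i, g i * a i) * (∑ i, g i * b i)
      = ∑ i, ∑ j, g i * g j * (a i * b j) := by
    rw [Finset.sum_mul_sum]
    exact Finset.sum_congr rfl fun i _ => Finset.sum_congr rfl fun j _ => by ring
  simp_rw [hexp]
  rw [integral_finsetSum _ fun i _ => integrable_finsetSum _ fun j _ => (hint i j).mul_const _]
  refine Finset.sum_congr rfl fun i _ => ?_
  rw [integral_finsetSum _ fun j _ => (hint i j).mul_const _]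
  simp [integral_mul_const, hcov]

/-- The rank-one tensor entry `∏ i, σ (j i)`. -/
def tensorEntry {N k : ℕ} (j : Fin k → Fin N) (σ : Fin N → ℝ) : ℝ := ∏ i, σ (j i)

lemma differentiable_tensorEntry {N k : ℕ} (j : Fin k → Fin N) :
    Differentiable ℝ (tensorEntry j) := by
  unfold tensorEntry
  fun_prop

/-- First-order Taylor remainder of a rank-one tensor entry at `m`. -/
def tensorRemainder {N k : ℕ} (m v : Fin N → ℝ) (j : Fin k → Fin N) : ℝ :=
  tensorEntry j (m + v) - tensorEntry j m - fderiv ℝ (tensorEntry j) m v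

lemma dotp_comm {N : ℕ} (x y : Fin N → ℝ) : dotp x y = dotp y x := by
  simp [dotp, mul_comm]

lemma dotp_add_left {N : ℕ} (x y z : Fin N → ℝ) : dotp (x + y) z = dotp x z + dotp y z := by
  simp [dotp, add_mul, Finset.sum_add_distrib]

lemma dotp_add_right {N : ℕ} (x y z : Fin N → ℝ) : dotp x (y + z) = dotp x y + dotp x z := by
  simp [dotp, mul_add, Finset.sum_add_distrib]

lemma hasFDerivAt_dotp_right {N : ℕ} (x σ : Fin N → ℝ) :
    HasFDerivAt (dotp x)
      (∑ i, x i • ContinuousLinearMap.proj (R := ℝ) (φ := fun _ : Fin N => ℝ) i) σ := by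
  have h : dotp x
      = ⇑(∑ i, x i • ContinuousLinearMap.proj (R := ℝ) (φ := fun _ : Fin N => ℝ) i) := by
    ext τ
    simp [dotp]
  rw [h]
  exact ContinuousLinearMap.hasFDerivAt _

lemma fderiv_dotp_right {N : ℕ} (x σ v : Fin N → ℝ) : fderiv ℝ (dotp x) σ v = dotp x v := by
  rw [(hasFDerivAt_dotp_right x σ).fderiv]
  simp [dotp]

lemma differentiable_dotp_right {N : ℕ} (x : Fin N → ℝ) : Differentiable ℝ (dotp x) :=
  fun σ => (hasFDerivAt_dotp_right x σ).differentiableAt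

lemma fderiv_dotp_pow {N : ℕ} (n : ℕ) (x σ v : Fin N → ℝ) :
    fderiv ℝ (fun τ => dotp x τ ^ n) σ v = n * dotp x σ ^ (n - 1) * dotp x v := by
  rw [fderiv_fun_pow n (differentiable_dotp_right x σ)]
  simp [fderiv_dotp_right, mul_assoc]

lemma sum_tensorEntry_mul_tensorEntry {N : ℕ} (k : ℕ) (x y : Fin N → ℝ) :
    ∑ j : Fin k → Fin N, tensorEntry j x * tensorEntry j y = dotp x y ^ k := by
  simp only [tensorEntry, ← Finset.prod_mul_distrib, dotp]
  rw [← Fintype.prod_sum fun (_ : Fin k) i => x i * y i]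
  simp

lemma sum_mul_fderiv_tensorEntry {N k : ℕ} (w : (Fin k → Fin N) → ℝ) (m v : Fin N → ℝ) :
    ∑ j, w j * fderiv ℝ (tensorEntry j) m v
      = fderiv ℝ (fun σ => ∑ j, w j * tensorEntry j σ) m v := by
  rw [fderiv_fun_sum fun j _ => (differentiable_tensorEntry j m).const_mul _]
  simp [fderiv_const_mul, differentiable_tensorEntry _ m]

lemma sum_tensorEntry_mul_fderiv {N : ℕ} (k : ℕ) (x m v : Fin N → ℝ) :
    ∑ j : Fin k → Fin N, tensorEntry j x * fderiv ℝ (tensorEntry j) m v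
      = k * dotp x m ^ (k - 1) * dotp x v := by
  simp_rw [sum_mul_fderiv_tensorEntry, sum_tensorEntry_mul_tensorEntry, fderiv_dotp_pow]

lemma sum_fderiv_mul_fderiv_tensorEntry {N : ℕ} (k : ℕ) (m v₁ v₂ : Fin N → ℝ)
    (h₁ : dotp v₁ m = 0) :
    ∑ j : Fin k → Fin N, fderiv ℝ (tensorEntry j) m v₁ * fderiv ℝ (tensorEntry j) m v₂
      = k * dotp m m ^ (k - 1) * dotp v₁ v₂ := by
  have hfun : (fun σ => ∑ j : Fin k → Fin N, fderiv ℝ (tensorEntry j) m v₁ * tensorEntry j σ)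
      = fun σ => (k * dotp m σ ^ (k - 1)) * dotp v₁ σ := by
    ext σ
    simp_rw [mul_comm _ (tensorEntry _ σ), sum_tensorEntry_mul_fderiv]
    rw [dotp_comm σ m, dotp_comm σ v₁]
  have hd : DifferentiableAt ℝ (fun σ => (k : ℝ) * dotp m σ ^ (k - 1)) m :=
    ((differentiable_dotp_right m m).fun_pow _).const_mul _
  rw [sum_mul_fderiv_tensorEntry, hfun, fderiv_fun_mul hd (differentiable_dotp_right v₁ m)]
  simp [fderiv_dotp_right, h₁]

lemma sum_tensorRemainder_mul_tensorRemainder {N : ℕ} (k : ℕ) (m v₁ v₂ : Fin N → ℝ)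
    (h₁ : dotp v₁ m = 0) (h₂ : dotp v₂ m = 0) :
    ∑ j : Fin k → Fin N, tensorRemainder m v₁ j * tensorRemainder m v₂ j
      = (dotp m m + dotp v₁ v₂) ^ k - dotp m m ^ k
        - k * dotp m m ^ (k - 1) * dotp v₁ v₂ := by
  have hexp (j : Fin k → Fin N) : tensorRemainder m v₁ j * tensorRemainder m v₂ j
      = tensorEntry j (m + v₁) * tensorEntry j (m + v₂) - tensorEntry j (m + v₁) * tensorEntry j m
        - tensorEntry j (m + v₁) * fderiv ℝ (tensorEntry j) m v₂
        - tensorEntry j m * tensorEntry j (m + v₂) + tensorEntry j m * tensorEntry j m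
        + tensorEntry j m * fderiv ℝ (tensorEntry j) m v₂
        - tensorEntry j (m + v₂) * fderiv ℝ (tensorEntry j) m v₁
        + tensorEntry j m * fderiv ℝ (tensorEntry j) m v₁
        + fderiv ℝ (tensorEntry j) m v₁ * fderiv ℝ (tensorEntry j) m v₂ := by
    unfold tensorRemainder
    ring
  have h₁' : dotp m v₁ = 0 := by rw [dotp_comm, h₁]
  have h₂' : dotp m v₂ = 0 := by rw [dotp_comm, h₂]
  simp_rw [hexp, Finset.sum_add_distrib, Finset.sum_sub_distrib, Finset.sum_add_distrib,
    Finset.sum_sub_distrib, sum_fderiv_mul_fderiv_tensorEntry k m v₁ v₂ h₁,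
    sum_tensorEntry_mul_tensorEntry, sum_tensorEntry_mul_fderiv, dotp_add_left, dotp_add_right,
    h₁, h₂, h₁', h₂', dotp_comm v₂ v₁]
  ring

lemma dotp_gradH {N P : ℕ} (c : ℕ → ℝ) (g : (k : ℕ) → (Fin k → Fin N) → ℝ)
    (m v : Fin N → ℝ) :
    dotp (gradH N P c g m) v = fderiv ℝ (hamiltonian N P c g) m v := by
  conv_rhs => rw [pi_eq_sum_univ' v, map_sum]
  refine Finset.sum_congr rfl fun i _ => ?_
  rw [map_smul, gradH, smul_eq_mul, mul_comm]

/-- The coefficients of the Taylor remainder of the Hamiltonian in the couplings. -/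
def remainderCoeff (N P : ℕ) (c : ℕ → ℝ) (m v : Fin N → ℝ) (i : GIdx N P) : ℝ :=
  c i.1 * (N : ℝ) ^ (-((((i.1 : ℕ) : ℝ) - 1) / 2)) * tensorRemainder m v i.2

lemma hamiltonian_remainder_eq_sum {N P : ℕ} (c : ℕ → ℝ)
    (g : (k : ℕ) → (Fin k → Fin N) → ℝ) (m v : Fin N → ℝ) :
    hamiltonian N P c g (m + v) - hamiltonian N P c g m - dotp (gradH N P c g m) v
      = ∑ i, flatten N P g i * remainderCoeff N P c m v i := by
  have hH : hamiltonian N P c g = fun σ => ∑ k ∈ Finset.Icc 2 P,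
      c k * (N : ℝ) ^ (-(((k : ℝ) - 1) / 2)) * ∑ j : Fin k → Fin N, g k j * tensorEntry j σ := rfl
  have hd (k : ℕ) : Differentiable ℝ fun σ => ∑ j : Fin k → Fin N, g k j * tensorEntry j σ :=
    Differentiable.fun_sum fun j _ => (differentiable_tensorEntry j).const_mul _
  have hfd : fderiv ℝ (hamiltonian N P c g) m v = ∑ k ∈ Finset.Icc 2 P,
      c k * (N : ℝ) ^ (-(((k : ℝ) - 1) / 2)) *
        ∑ j : Fin k → Fin N, g k j * fderiv ℝ (tensorEntry j) m v := by
    rw [hH, fderiv_fun_sum fun k _ => (hd k m).const_mul _]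
    simp_rw [sum_mul_fderiv_tensorEntry]
    simp [fderiv_const_mul, hd _ m]
  rw [dotp_gradH, hfd, hH, Fintype.sum_sigma, ← Finset.sum_sub_distrib, ← Finset.sum_sub_distrib,
    ← Finset.sum_coe_sort]
  refine Finset.sum_congr rfl fun k _ => ?_
  rw [← mul_sub, ← mul_sub, ← Finset.sum_sub_distrib, ← Finset.sum_sub_distrib, Finset.mul_sum]
  refine Finset.sum_congr rfl fun j _ => ?_
  simp only [flatten, remainderCoeff, tensorRemainder]
  ring

lemma sum_remainderCoeff_mul_remainderCoeff {N P : ℕ} (hN : 1 ≤ N) (c : ℕ → ℝ) (q : ℝ)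
    (m v₁ v₂ : Fin N → ℝ) (hm : dotp m m = N * q) (h₁ : dotp v₁ m = 0) (h₂ : dotp v₂ m = 0) :
    ∑ i, remainderCoeff N P c m v₁ i * remainderCoeff N P c m v₂ i
      = N * (xiFun P c (q + dotp v₁ v₂ / N) - xiFun P c q - xiD1 P c q * (dotp v₁ v₂ / N)) := by
  have hN0 : (0 : ℝ) < N := by exact_mod_cast hN
  rw [Fintype.sum_sigma, xiFun, xiFun, xiD1, Finset.sum_mul, ← Finset.sum_sub_distrib,
    ← Finset.sum_sub_distrib, Finset.mul_sum, ← Finset.sum_coe_sort (Finset.Icc 2 P)]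
  refine Finset.sum_congr rfl fun k _ => ?_
  obtain ⟨k, hk⟩ := k
  obtain ⟨n, rfl⟩ : ∃ n, k = n + 1 := ⟨k - 1, by have := (Finset.mem_Icc.mp hk).1; omega⟩
  have hpow : (N : ℝ) ^ (-((((n + 1 : ℕ) : ℝ) - 1) / 2))
      * (N : ℝ) ^ (-((((n + 1 : ℕ) : ℝ) - 1) / 2)) = ((N : ℝ) ^ n)⁻¹ := by
    rw [← Real.rpow_add hN0, ← Real.rpow_natCast, ← Real.rpow_neg hN0.le]
    congr 1
    push_cast
    ring
  have hadd : N * q + dotp v₁ v₂ = N * (q + dotp v₁ v₂ / N) := by field_simp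
  have hterm (j : Fin (n + 1) → Fin N) :
      remainderCoeff N P c m v₁ ⟨⟨n + 1, hk⟩, j⟩ * remainderCoeff N P c m v₂ ⟨⟨n + 1, hk⟩, j⟩
        = c (n + 1) ^ 2 * ((N : ℝ) ^ n)⁻¹ * (tensorRemainder m v₁ j * tensorRemainder m v₂ j) := by
    simp only [remainderCoeff]
    rw [← hpow]
    ring
  simp_rw [hterm]
  rw [← Finset.mul_sum, sum_tensorRemainder_mul_tensorRemainder _ m v₁ v₂ h₁ h₂, hm, hadd, mul_pow,
    mul_pow, mul_pow, Nat.add_sub_cancel]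
  field_simp
  ring

/-- the first-order Taylor remainder of `H_N` around `m`, evaluated along
directions orthogonal to `m`, is a centered Gaussian field with covariance
`N(ξ(q + ⟨v¹,v²⟩/N) - ξ(q) - ξ'(q)⟨v¹,v²⟩/N)`. -/
theorem statement_13 {Ω : Type*} [MeasureSpace Ω] [IsProbabilityMeasure (ℙ : Measure Ω)]
    (P : ℕ) (hP : 2 ≤ P) (c : ℕ → ℝ) (hc : ∃ k ∈ Finset.Icc 2 P, c k ≠ 0)
    (N : ℕ) (hN : 1 ≤ N)
    (G : Ω → (k : ℕ) → (Fin k → Fin N) → ℝ) (hG : StdGaussianCouplings N P G)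
    (q : ℝ) (hq : q ∈ Set.Icc (0 : ℝ) 1)
    (m : Fin N → ℝ) (hm : ∑ i, (m i) ^ 2 = N * q) :
    (∀ v : Fin N → ℝ, dotp v m = 0 →
      ∃ var : ℝ≥0,
        Measure.map (fun ω =>
            hamiltonian N P c (G ω) (m + v) - hamiltonian N P c (G ω) m
              - dotp (gradH N P c (G ω) m) v) ℙ
          = gaussianReal 0 var)
    ∧ ∀ v₁ v₂ : Fin N → ℝ, dotp v₁ m = 0 → dotp v₂ m = 0 →
        (∫ ω, (hamiltonian N P c (G ω) (m + v₁) - hamiltonian N P c (G ω) m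
            - dotp (gradH N P c (G ω) m) v₁)
          * (hamiltonian N P c (G ω) (m + v₂) - hamiltonian N P c (G ω) m
            - dotp (gradH N P c (G ω) m) v₂) ∂ℙ)
        = N * (xiFun P c (q + dotp v₁ v₂ / N) - xiFun P c q
            - xiD1 P c q * (dotp v₁ v₂ / N)) := by
  have hmap := hG
  rw [StdGaussianCouplings] at hmap
  have hG_meas : AEMeasurable (fun ω => flatten N P (G ω)) ℙ :=
    AEMeasurable.of_map_ne_zero (by rw [hmap]; exact IsProbabilityMeasure.ne_zero _)
  have hmm : dotp m m = N * q := by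
    rw [← hm]
    exact Finset.sum_congr rfl fun i _ => (sq (m i)).symm
  simp_rw [hamiltonian_remainder_eq_sum]
  refine ⟨fun v _ => ?_, fun v₁ v₂ h₁ h₂ => ?_⟩
  · obtain ⟨var, hvar⟩ := map_sum_mul_pi_gaussianReal (remainderCoeff N P c m v)
    refine ⟨var, ?_⟩
    rw [← hvar, ← hmap, AEMeasurable.map_map_of_aemeasurable
      (Measurable.aemeasurable (by fun_prop)) hG_meas]
    rfl
  · rw [← sum_remainderCoeff_mul_remainderCoeff hN c q m v₁ v₂ hmm h₁ h₂,
      ← integral_sum_mul_sum_pi_gaussianReal, ← hmap, integral_map hG_meas (by fun_prop)]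
end
end

section
/- Fix q ∈ [0,1) and for each N ≥ 1 let m_N ∈ ℝ^N satisfy ‖m_N‖₂² = N q. Then lim_{δ→0⁺} limsup_{N→∞} (1/N) log μ_N( Band(m_N, δ) ) = lim_{δ→0⁺} liminf_{N→∞} (1/N) log μ_N( Band(m_N, δ) ) = ½ log(1 − q). -/
open MeasureTheory ProbabilityTheory Filter
open scoped ENNReal NNReal

noncomputable section

/-- Tonelli for a product of functions of separate coordinates. -/
theorem lintegral_pi_prod_eq_prod {ι : Type*} [Fintype ι] {Ω : ι → Type*}
    [∀ i, MeasurableSpace (Ω i)] (μ : ∀ i, Measure (Ω i)) [∀ i, IsProbabilityMeasure (μ i)]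
    (f : ∀ i, Ω i → ℝ≥0∞) (hf : ∀ i, Measurable (f i)) :
    ∫⁻ x, ∏ i, f i (x i) ∂Measure.pi μ = ∏ i, ∫⁻ x, f i x ∂μ i := by
  refine (lintegral_prod_eq_prod_lintegral_of_indepFun Finset.univ
    (fun i (x : ∀ i, Ω i) => f i (x i))
    (iIndepFun_pi fun i => (hf i).aemeasurable)
    fun i => (hf i).comp (measurable_pi_apply i)).trans ?_
  exact Finset.prod_congr rfl fun i _ => (measurePreserving_eval μ i).lintegral_comp (hf i)

/-- The Laplace transform of a linear plus a quadratic function of a standard Gaussian. -/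
theorem lintegral_exp_linear_sub_sq_gaussianReal (b κ : ℝ) (hκ : 0 < 1 + 2 * κ) :
    ∫⁻ x, ENNReal.ofReal (Real.exp (b * x - κ * x ^ 2)) ∂gaussianReal 0 1 =
      ENNReal.ofReal (Real.exp (b ^ 2 / (2 * (1 + 2 * κ))) / √(1 + 2 * κ)) := by
  set v : ℝ≥0 := ⟨(1 + 2 * κ)⁻¹, by positivity⟩ with hv
  have hvr : (v : ℝ) = (1 + 2 * κ)⁻¹ := rfl
  have hv0 : v ≠ 0 := by
    rw [← NNReal.coe_ne_zero, hvr]; positivity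
  rw [gaussianReal_of_var_ne_zero _ one_ne_zero,
    lintegral_withDensity_eq_lintegral_mul _ (measurable_gaussianPDF _ _) (by fun_prop)]
  have key : ∀ x, (gaussianPDF 0 1 * fun x => ENNReal.ofReal (Real.exp (b * x - κ * x ^ 2))) x =
      ENNReal.ofReal (Real.exp (b ^ 2 / (2 * (1 + 2 * κ))) / √(1 + 2 * κ)) *
        gaussianPDF (b * v) v x := by
    intro x
    simp only [Pi.mul_apply, gaussianPDF]
    rw [← ENNReal.ofReal_mul (gaussianPDFReal_nonneg _ _ _), ← ENNReal.ofReal_mul (by positivity)]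
    congr 1
    simp only [gaussianPDFReal, hvr, NNReal.coe_one]
    have h1 : √(2 * Real.pi * (1 + 2 * κ)⁻¹) = √(2 * Real.pi) / √(1 + 2 * κ) := by
      rw [← div_eq_mul_inv, Real.sqrt_div (by positivity)]
    have hs : √(1 + 2 * κ) ≠ 0 := (Real.sqrt_pos.2 hκ).ne'
    have hp : √(2 * Real.pi) ≠ 0 := (Real.sqrt_pos.2 (by positivity)).ne'
    rw [h1, mul_one, mul_assoc, ← Real.exp_add]
    have h2 : Real.exp (b ^ 2 / (2 * (1 + 2 * κ))) / √(1 + 2 * κ) *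
        ((√(2 * Real.pi) / √(1 + 2 * κ))⁻¹ *
          Real.exp (-(x - b * (1 + 2 * κ)⁻¹) ^ 2 / (2 * (1 + 2 * κ)⁻¹))) =
        (√(2 * Real.pi))⁻¹ * (Real.exp (b ^ 2 / (2 * (1 + 2 * κ))) *
          Real.exp (-(x - b * (1 + 2 * κ)⁻¹) ^ 2 / (2 * (1 + 2 * κ)⁻¹))) := by
      field_simp
    rw [h2, ← Real.exp_add]
    congr 2
    have := hκ.ne'
    field_simp
    ring
  simp_rw [key]
  rw [lintegral_const_mul _ (measurable_gaussianPDF _ _), lintegral_gaussianPDF_eq_one _ hv0,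
    mul_one]

/-- Change of variables `x = a + c h` for the standard Gaussian on the line. -/
theorem setLIntegral_gaussianReal_affine (a c : ℝ) (hc : 0 < c) {s : Set ℝ}
    (hs : MeasurableSet s) :
    ∫⁻ h in (fun h => a + c * h) ⁻¹' s,
      ENNReal.ofReal (c * Real.exp (h ^ 2 / 2 - (a + c * h) ^ 2 / 2)) ∂gaussianReal 0 1 =
      gaussianReal 0 1 s := by
  set v : ℝ≥0 := ⟨c ^ 2, by positivity⟩ with hv
  have hvr : (v : ℝ) = c ^ 2 := rfl
  have hv0 : v ≠ 0 := by
    rw [← NNReal.coe_ne_zero, hvr]; positivity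
  have hmap : (gaussianReal 0 1).map (fun h => a + c * h) = gaussianReal a v := by
    have h1 : (gaussianReal 0 1).map (c * ·) = gaussianReal 0 v := by
      rw [gaussianReal_map_const_mul, mul_zero, mul_one]; rfl
    have h2 := gaussianReal_map_const_add (μ := 0) (v := v) a
    rw [← h1, Measure.map_map (by fun_prop) (by fun_prop)] at h2
    simpa [Function.comp_def] using h2
  have hcv : ∀ h : ℝ, h = ((a + c * h) - a) / c := fun h => by field_simp; ring
  have e1 : ∫⁻ h in (fun h => a + c * h) ⁻¹' s,
      ENNReal.ofReal (c * Real.exp (h ^ 2 / 2 - (a + c * h) ^ 2 / 2)) ∂gaussianReal 0 1 =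
      ∫⁻ x in s, ENNReal.ofReal (c * Real.exp (((x - a) / c) ^ 2 / 2 - x ^ 2 / 2))
        ∂gaussianReal a v := by
    rw [← hmap, setLIntegral_map hs (by fun_prop) (by fun_prop)]
    refine setLIntegral_congr_fun (hs.preimage (by fun_prop)) fun h _ => ?_
    simp only [← hcv h]
  rw [e1, gaussianReal_of_var_ne_zero _ hv0, gaussianReal_of_var_ne_zero _ one_ne_zero,
    withDensity_apply _ hs, setLIntegral_withDensity_eq_setLIntegral_mul _
      (measurable_gaussianPDF _ _) (by fun_prop) hs]
  refine setLIntegral_congr_fun hs fun x _ => ?_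
  simp only [Pi.mul_apply, gaussianPDF]
  rw [← ENNReal.ofReal_mul (gaussianPDFReal_nonneg _ _ _)]
  congr 1
  simp only [gaussianPDFReal, hvr, NNReal.coe_one]
  have h1 : √(2 * Real.pi * c ^ 2) = √(2 * Real.pi) * c := by
    rw [Real.sqrt_mul (by positivity), Real.sqrt_sq hc.le]
  have hp : √(2 * Real.pi) ≠ 0 := (Real.sqrt_pos.2 (by positivity)).ne'
  rw [h1, mul_one]
  have h2 : (√(2 * Real.pi) * c)⁻¹ * Real.exp (-(x - a) ^ 2 / (2 * c ^ 2)) *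
      (c * Real.exp (((x - a) / c) ^ 2 / 2 - x ^ 2 / 2)) = (√(2 * Real.pi))⁻¹ *
      (Real.exp (-(x - a) ^ 2 / (2 * c ^ 2)) * Real.exp (((x - a) / c) ^ 2 / 2 - x ^ 2 / 2)) := by
    field_simp
  rw [h2, ← Real.exp_add]
  congr 2
  field_simp
  ring

/-- Change of variables `g = a + c h` for the standard Gaussian measure on `ℝ^N`. -/
theorem pi_gaussianReal_apply_eq_lintegral_affine {N : ℕ} (a : Fin N → ℝ) (c : ℝ) (hc : 0 < c)
    {A : Set (Fin N → ℝ)} (hA : MeasurableSet A) :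
    (Measure.pi fun _ : Fin N => gaussianReal 0 1) A =
      ∫⁻ h in (fun h i => a i + c * h i) ⁻¹' A,
        ∏ i, ENNReal.ofReal (c * Real.exp (h i ^ 2 / 2 - (a i + c * h i) ^ 2 / 2))
        ∂(Measure.pi fun _ : Fin N => gaussianReal 0 1) := by
  set γ := Measure.pi fun _ : Fin N => gaussianReal 0 1 with hγ
  set φ : Fin N → ℝ → ℝ≥0∞ := fun i h =>
    ENNReal.ofReal (c * Real.exp (h ^ 2 / 2 - (a i + c * h) ^ 2 / 2)) with hφ
  have hφm : ∀ i, Measurable (φ i) := fun i => by fun_prop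
  have hT : Measurable (fun (h : Fin N → ℝ) i => a i + c * h i) := by fun_prop
  have hpi : γ = (γ.withDensity fun h => ∏ i, φ i (h i)).map (fun h i => a i + c * h i) := by
    refine Measure.pi_eq fun s hs => ?_
    have hbox := MeasurableSet.univ_pi hs
    rw [Measure.map_apply hT hbox, withDensity_apply _ (hT hbox), ← lintegral_indicator (hT hbox)]
    have : ∀ h : Fin N → ℝ, ((fun (h : Fin N → ℝ) i => a i + c * h i) ⁻¹' Set.univ.pi s).indicator
        (fun h => ∏ i, φ i (h i)) h =
        ∏ i, ((fun x => a i + c * x) ⁻¹' s i).indicator (φ i) (h i) := by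
      intro h
      by_cases hh : ∀ i, a i + c * h i ∈ s i
      · rw [Set.indicator_of_mem (by simpa using hh)]
        exact Finset.prod_congr rfl fun i _ => (Set.indicator_of_mem (by simpa using hh i) _).symm
      · rw [Set.indicator_of_notMem (by simpa using hh)]
        obtain ⟨i, hi⟩ := not_forall.1 hh
        exact (Finset.prod_eq_zero (Finset.mem_univ i)
          (Set.indicator_of_notMem (s := (fun x => a i + c * x) ⁻¹' s i) hi _)).symm
    simp_rw [this]
    rw [hγ, lintegral_pi_prod_eq_prod _ (fun i => ((fun x => a i + c * x) ⁻¹' s i).indicator (φ i))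
      fun i => (hφm i).indicator ((hs i).preimage (by fun_prop))]
    refine Finset.prod_congr rfl fun i _ => ?_
    rw [lintegral_indicator ((hs i).preimage (by fun_prop))]
    exact setLIntegral_gaussianReal_affine (a i) c hc (hs i)
  conv_lhs => rw [hpi]
  rw [Measure.map_apply hT hA, withDensity_apply _ (hT hA)]

/-- Chebyshev's inequality for a sum of functions of independent standard Gaussians. -/
theorem pi_gaussianReal_chebyshev {N : ℕ} (X : Fin N → ℝ → ℝ)
    (hX : ∀ i, MemLp (X i) 2 (gaussianReal 0 1)) {t : ℝ} (ht : 0 < t) :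
    (Measure.pi fun _ : Fin N => gaussianReal 0 1)
      {h | t ≤ |∑ i, X i (h i) - ∑ i, ∫ x, X i x ∂gaussianReal 0 1|} ≤
      ENNReal.ofReal ((∑ i, Var[X i; gaussianReal 0 1]) / t ^ 2) := by
  set γ := Measure.pi fun _ : Fin N => gaussianReal 0 1 with hγ
  have hmem : ∀ i, MemLp (fun h : Fin N → ℝ => X i (h i)) 2 γ := fun i =>
    (hX i).comp_measurePreserving (measurePreserving_eval (fun _ : Fin N => gaussianReal 0 1) i)
  have hsum : MemLp (∑ i, fun h : Fin N → ℝ => X i (h i)) 2 γ := memLp_finsetSum' _ fun i _ => hmem i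
  have hint : γ[∑ i, fun h : Fin N → ℝ => X i (h i)] = ∑ i, ∫ x, X i x ∂gaussianReal 0 1 := by
    simp only [Finset.sum_apply]
    rw [integral_finsetSum _ fun i _ => (hmem i).integrable (by norm_num)]
    refine Finset.sum_congr rfl fun i _ => ?_
    have hmp := measurePreserving_eval (fun _ : Fin N => gaussianReal 0 1) i
    have := integral_map (μ := γ) hmp.measurable.aemeasurable (f := X i)
      (by rw [hmp.map_eq]; exact (hX i).aestronglyMeasurable)
    rw [hmp.map_eq] at this
    exact this.symm
  have := meas_ge_le_variance_div_sq hsum ht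
  rw [hint, variance_sum_pi hX] at this
  simpa using this

theorem integral_sq_gaussianReal_zero_one : ∫ x, x ^ 2 ∂gaussianReal 0 1 = 1 := by
  have h := variance_fun_id_gaussianReal (μ := 0) (v := 1)
  rw [variance_eq_integral (by fun_prop)] at h
  simpa using h

theorem memLp_sq_gaussianReal : MemLp (fun x : ℝ => x ^ 2) 2 (gaussianReal 0 1) := by
  have h := memLp_id_gaussianReal (μ := 0) (v := 1) 4
  have : MemLp (fun x : ℝ => x) 4 (gaussianReal 0 1) := h
  have := this.mul (p := 4) (q := 4) (r := 2) this (hpqr := ⟨by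
    rw [show (4 : ℝ≥0∞) = 2 * 2 by norm_num, ENNReal.mul_inv (by simp) (by simp), ← mul_add,
      ENNReal.inv_two_add_inv_two, mul_one]⟩)
  exact this.congr_norm (by fun_prop) (ae_of_all _ fun x => by simp [sq])

/-- A standard Gaussian vector in `ℝ^N` has squared norm close to `N` and overlap with `m_N` close
to zero, with probability tending to one. -/
theorem eventually_half_le_pi_gaussianReal_typical (q : ℝ) (m : (N : ℕ) → Fin N → ℝ)
    (hm : ∀ N, 1 ≤ N → ∑ i, (m N i) ^ 2 = N * q) {η : ℝ} (hη : 0 < η) :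
    ∀ᶠ N : ℕ in atTop, 1 / 2 ≤ (Measure.pi fun _ : Fin N => gaussianReal 0 1)
      {h | |∑ i, h i ^ 2 - N| < N * η ∧ |∑ i, h i * m N i| < N * η} := by
  set V := Var[fun x : ℝ => x ^ 2; gaussianReal 0 1] with hV
  have hlim : Tendsto (fun N : ℕ => (V / η ^ 2 + q / η ^ 2) / (N : ℝ)) atTop (nhds 0) :=
    tendsto_const_div_atTop_nhds_zero_nat _
  filter_upwards [hlim.eventually (gt_mem_nhds (show (0 : ℝ) < 1 / 2 by norm_num)),
    eventually_ge_atTop 1] with N hN hN1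
  have hN0 : (0 : ℝ) < N := by exact_mod_cast hN1
  have hq : 0 ≤ q := by
    have : 0 ≤ N * q := hm N hN1 ▸ Finset.sum_nonneg fun i _ => sq_nonneg (m N i)
    exact nonneg_of_mul_nonneg_right this hN0
  have hV0 : 0 ≤ V := variance_nonneg _ _
  set γ := Measure.pi fun _ : Fin N => gaussianReal 0 1 with hγ
  have h1 := pi_gaussianReal_chebyshev (N := N) (fun _ x => x ^ 2)
    (fun _ => memLp_sq_gaussianReal) (mul_pos hN0 hη)
  have h2 := pi_gaussianReal_chebyshev (N := N) (fun i x => x * m N i)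
    (fun i => (memLp_id_gaussianReal 2).mul_const (m N i)) (mul_pos hN0 hη)
  simp only [integral_sq_gaussianReal_zero_one, ← hV, Finset.sum_const, Finset.card_univ,
    Fintype.card_fin, nsmul_eq_mul, mul_one] at h1
  have hvar : ∀ i, Var[fun x => x * m N i; gaussianReal 0 1] = m N i ^ 2 := fun i => by
    rw [variance_mul_const, variance_fun_id_gaussianReal]; simp
  have hmean : ∀ i, ∫ x, x * m N i ∂gaussianReal 0 1 = 0 := fun i => by
    rw [integral_mul_const, integral_id_gaussianReal, zero_mul]
  simp only [hvar, hmean, Finset.sum_const_zero, sub_zero, hm N hN1] at h2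
  set G : Set (Fin N → ℝ) := {h | |∑ i, h i ^ 2 - N| < N * η ∧ |∑ i, h i * m N i| < N * η} with hG
  have hGm : MeasurableSet G :=
    (measurableSet_lt (f := fun h : Fin N → ℝ => |∑ i, h i ^ 2 - N|) (by fun_prop)
      measurable_const).inter
    (measurableSet_lt (f := fun h : Fin N → ℝ => |∑ i, h i * m N i|) (by fun_prop)
      measurable_const)
  have hcompl : γ Gᶜ ≤ 1 / 2 := by
    have hsub : Gᶜ ⊆ {h | N * η ≤ |∑ i, h i ^ 2 - N|} ∪ {h | N * η ≤ |∑ i, h i * m N i|} := by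
      intro h hh
      simp only [hG, Set.mem_compl_iff, Set.mem_ofPred_eq, not_and_or, not_lt] at hh
      exact hh
    refine (measure_mono hsub).trans ((measure_union_le _ _).trans ((add_le_add h1 h2).trans ?_))
    rw [← ENNReal.ofReal_add (by positivity) (by positivity)]
    have : (1 / 2 : ℝ≥0∞) = ENNReal.ofReal (1 / 2) := by
      rw [ENNReal.ofReal_div_of_pos (by norm_num)]; simp
    rw [this]
    refine ENNReal.ofReal_le_ofReal (le_trans (le_of_eq ?_) hN.le)
    field_simp
  have hadd := prob_add_prob_compl (μ := γ) hGm
  by_contra! hlt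
  have : γ G + γ Gᶜ < 1 := by
    calc γ G + γ Gᶜ < 1 / 2 + 1 / 2 :=
          ENNReal.add_lt_add_of_lt_of_le (by finiteness) hlt hcompl
      _ = 1 := ENNReal.add_halves 1
  exact this.ne hadd

theorem measurable_sphere_projection (N : ℕ) :
    Measurable fun (g : Fin N → ℝ) i => Real.sqrt N * g i / Real.sqrt (∑ j, (g j) ^ 2) := by
  fun_prop

theorem measurableSet_band (N : ℕ) (m : Fin N → ℝ) (δ : ℝ) : MeasurableSet (band N m δ) := by
  refine (measurableSet_eq_fun (f := fun σ : Fin N → ℝ => ∑ i, σ i ^ 2) (by fun_prop)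
    measurable_const).inter
    (measurableSet_lt (f := fun σ : Fin N → ℝ => |dotp (σ - m) m|) ?_ measurable_const)
  simp only [dotp, Pi.sub_apply]
  fun_prop

theorem sphereUniform_band (N : ℕ) (m : Fin N → ℝ) (δ : ℝ) :
    sphereUniform N (band N m δ) = (Measure.pi fun _ : Fin N => gaussianReal 0 1)
      ((fun g i => Real.sqrt N * g i / Real.sqrt (∑ j, (g j) ^ 2)) ⁻¹' band N m δ) :=
  Measure.map_apply (measurable_sphere_projection N) (measurableSet_band N m δ)

theorem dotp_sphere_projection_sub {N : ℕ} (g m : Fin N → ℝ) :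
    dotp ((fun i => Real.sqrt N * g i / Real.sqrt (∑ j, (g j) ^ 2)) - m) m =
      Real.sqrt N * (∑ i, g i * m i) / Real.sqrt (∑ j, (g j) ^ 2) - ∑ i, m i ^ 2 := by
  simp only [dotp, Pi.sub_apply, Finset.mul_sum, Finset.sum_div, ← Finset.sum_sub_distrib]
  exact Finset.sum_congr rfl fun i _ => by ring

/-- Exponential lower bound on the volume of the band. -/
theorem eventually_exp_le_sphereUniform_band (q : ℝ) (hq : q ∈ Set.Ico (0 : ℝ) 1)
    (m : (N : ℕ) → Fin N → ℝ) (hm : ∀ N, 1 ≤ N → ∑ i, (m N i) ^ 2 = N * q)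
    {δ ε : ℝ} (hδ : 0 < δ) (hε : 0 < ε) :
    ∀ᶠ N : ℕ in atTop, ENNReal.ofReal (Real.exp (N * (Real.log (1 - q) / 2 - ε))) ≤
      sphereUniform N (band N (m N) δ) := by
  obtain ⟨hq0, hq1⟩ := hq
  have hcont : ContinuousAt (fun z : ℝ × ℝ => z.1 / √z.2) (q, 1) :=
    continuousAt_fst.div (Real.continuous_sqrt.continuousAt.comp continuousAt_snd) (by simp)
  obtain ⟨κ, hκ, hclose⟩ := Metric.continuousAt_iff.1 hcont δ hδ
  set η := min (κ / 4) (min (ε / 3) (1 / 8)) with hηdef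
  have hη : 0 < η := by positivity
  have hη1 : η ≤ κ / 4 := min_le_left _ _
  have hη2 : η ≤ ε / 3 := (min_le_right _ _).trans (min_le_left _ _)
  have hη3 : η ≤ 1 / 8 := (min_le_right _ _).trans (min_le_right _ _)
  set c := √(1 - q) with hcdef
  have hc : 0 < c := Real.sqrt_pos.2 (by linarith)
  have hc2 : c ^ 2 = 1 - q := Real.sq_sqrt (by linarith)
  have hc1 : c ≤ 1 := by nlinarith
  have hlog : Tendsto (fun N : ℕ => Real.log 2 / (N : ℝ)) atTop (nhds 0) :=
    tendsto_const_div_atTop_nhds_zero_nat _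
  filter_upwards [eventually_half_le_pi_gaussianReal_typical q m hm hη,
    hlog.eventually (gt_mem_nhds (half_pos hε)), eventually_ge_atTop 1] with N hG hlN hN1
  have hN0 : (0 : ℝ) < N := by exact_mod_cast hN1
  set γ := Measure.pi fun _ : Fin N => gaussianReal 0 1 with hγ
  set G : Set (Fin N → ℝ) :=
    {h | |∑ i, h i ^ 2 - N| < N * η ∧ |∑ i, h i * m N i| < N * η} with hGdef
  have hnorm : ∀ h : Fin N → ℝ, ∑ i, (m N i + c * h i) ^ 2 =
      N * q + 2 * c * ∑ i, h i * m N i + (1 - q) * ∑ i, h i ^ 2 := by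
    intro h
    rw [← hm N hN1, ← hc2, Finset.mul_sum, Finset.mul_sum, ← Finset.sum_add_distrib,
      ← Finset.sum_add_distrib]
    exact Finset.sum_congr rfl fun i _ => by ring
  have hdot : ∀ h : Fin N → ℝ, ∑ i, (m N i + c * h i) * m N i =
      N * q + c * ∑ i, h i * m N i := by
    intro h
    rw [← hm N hN1, Finset.mul_sum, ← Finset.sum_add_distrib]
    exact Finset.sum_congr rfl fun i _ => by ring
  have hcross : ∀ h ∈ G, |c * ∑ i, h i * m N i| < N * η := fun h hh => by
    rw [abs_mul, abs_of_pos hc]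
    exact (mul_le_of_le_one_left (abs_nonneg _) hc1).trans_lt hh.2
  have hdev : ∀ h ∈ G, |(1 - q) * (∑ i, h i ^ 2 - N)| < N * η := fun h hh => by
    rw [abs_mul, abs_of_pos (by linarith)]
    exact (mul_le_of_le_one_left (abs_nonneg _) (by linarith)).trans_lt hh.1
  have hdev' : ∀ h ∈ G, |q * (∑ i, h i ^ 2 - N)| < N * η := fun h hh => by
    rw [abs_mul, abs_of_nonneg hq0]
    exact (mul_le_of_le_one_left (abs_nonneg _) hq1.le).trans_lt hh.1
  have hsub : G ⊆ (fun h i => m N i + c * h i) ⁻¹'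
      ((fun g i => Real.sqrt N * g i / Real.sqrt (∑ j, (g j) ^ 2)) ⁻¹' band N (m N) δ) := by
    intro h hh
    have h1 := abs_lt.1 (hcross h hh)
    have h2 := abs_lt.1 (hdev h hh)
    set S := ∑ i, (m N i + c * h i) ^ 2 with hS
    have hSl : N * (1 - 3 * η) < S := by rw [hS, hnorm]; nlinarith
    have hSu : S < N * (1 + 3 * η) := by rw [hS, hnorm]; nlinarith
    have hS0 : 0 < S := (mul_nonneg hN0.le (by linarith)).trans_lt hSl
    refine ⟨?_, ?_⟩
    · change ∑ i, (Real.sqrt N * (m N i + c * h i) / Real.sqrt S) ^ 2 = (N : ℝ)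
      simp_rw [div_pow, mul_pow, Real.sq_sqrt hS0.le, Real.sq_sqrt hN0.le]
      rw [← Finset.sum_div, ← Finset.mul_sum, ← hS]
      field_simp
    · change |dotp ((fun i => Real.sqrt N * (m N i + c * h i) / Real.sqrt S) - m N) (m N)| < N * δ
      rw [dotp_sphere_projection_sub (fun i => m N i + c * h i), hm N hN1, ← hS, hdot]
      have hz : dist (((N * q + c * ∑ i, h i * m N i) / N, S / N) : ℝ × ℝ) (q, 1) < κ := by
        rw [Prod.dist_eq, max_lt_iff, Real.dist_eq, Real.dist_eq, abs_lt, abs_lt]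
        simp only
        have e1 : (N * q + c * ∑ i, h i * m N i) / N - q = (c * ∑ i, h i * m N i) / N := by
          field_simp; ring
        rw [e1, lt_div_iff₀ hN0, div_lt_iff₀ hN0, lt_sub_iff_add_lt, sub_lt_iff_lt_add,
          lt_div_iff₀ hN0, div_lt_iff₀ hN0]
        refine ⟨⟨?_, ?_⟩, ?_, ?_⟩ <;> nlinarith
      have := hclose hz
      rw [Real.dist_eq] at this
      simp only [Real.sqrt_one, div_one] at this
      have e2 : Real.sqrt N * (N * q + c * ∑ i, h i * m N i) / Real.sqrt S - N * q =
          N * ((N * q + c * ∑ i, h i * m N i) / N / √(S / N) - q) := by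
        rw [Real.sqrt_div hS0.le]
        have := (Real.sqrt_pos.2 hS0).ne'
        field_simp
      rw [e2, abs_mul, abs_of_pos hN0]
      exact mul_lt_mul_of_pos_left this hN0
  have hden : ∀ h ∈ G, ENNReal.ofReal (c ^ N * Real.exp (-(3 / 2 * (N * η)))) ≤
      ∏ i, ENNReal.ofReal (c * Real.exp (h i ^ 2 / 2 - (m N i + c * h i) ^ 2 / 2)) := by
    intro h hh
    rw [← ENNReal.ofReal_prod_of_nonneg fun i _ => by positivity]
    refine ENNReal.ofReal_le_ofReal ?_
    rw [Finset.prod_mul_distrib, Finset.prod_const, Finset.card_univ, Fintype.card_fin,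
      ← Real.exp_sum, Finset.sum_sub_distrib, ← Finset.sum_div, ← Finset.sum_div, hnorm]
    have h1 := abs_lt.1 (hcross h hh)
    have h2 := abs_lt.1 (hdev' h hh)
    gcongr
    nlinarith
  have hbound : ENNReal.ofReal (c ^ N * Real.exp (-(3 / 2 * (N * η)))) * (1 / 2) ≤
      sphereUniform N (band N (m N) δ) := by
    rw [sphereUniform_band, pi_gaussianReal_apply_eq_lintegral_affine (m N) c hc
      (measurable_sphere_projection N (measurableSet_band N (m N) δ))]
    refine le_trans ?_ (lintegral_mono_set hsub)
    refine (mul_le_mul_right hG _).trans ?_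
    rw [← setLIntegral_const]
    refine setLIntegral_mono (Finset.measurable_prod _ fun i _ => by fun_prop) hden
  refine le_trans ?_ hbound
  have : (1 / 2 : ℝ≥0∞) = ENNReal.ofReal (1 / 2) := by
    rw [ENNReal.ofReal_div_of_pos (by norm_num)]; simp
  rw [this, ← ENNReal.ofReal_mul (by positivity)]
  refine ENNReal.ofReal_le_ofReal ?_
  have hcN : c ^ N = Real.exp (N * (Real.log (1 - q) / 2)) := by
    rw [← Real.log_sqrt (by linarith), ← hcdef, Real.exp_nat_mul, Real.exp_log hc]
  have h2 : (1 / 2 : ℝ) = Real.exp (-Real.log 2) := by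
    rw [Real.exp_neg, Real.exp_log (by norm_num)]; norm_num
  rw [hcN, h2, ← Real.exp_add, ← Real.exp_add]
  refine Real.exp_le_exp.2 ?_
  rw [div_lt_iff₀ hN0] at hlN
  nlinarith

/-- Exponential upper bound on the volume of a band at overlap at least `a`. -/
theorem sphereUniform_band_le {N : ℕ} (hN : 1 ≤ N) {q a τ : ℝ} (ha : 0 ≤ a)
    (hτ : τ ^ 2 * (q - a ^ 2) < 1) (m : Fin N → ℝ) (hm : ∑ i, (m i) ^ 2 = N * q) :
    sphereUniform N (band N m (q - a)) ≤ ENNReal.ofReal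
      ((√(1 + τ ^ 2 * a ^ 2))⁻¹ ^ N / √(1 - τ ^ 2 * q / (1 + τ ^ 2 * a ^ 2))) := by
  have hN0 : (0 : ℝ) < N := by exact_mod_cast hN
  set s := 1 + τ ^ 2 * a ^ 2 with hs
  have hs0 : 0 < s := by positivity
  set β := τ ^ 2 * q / s with hβ
  have hβ1 : β < 1 := by rw [hβ, div_lt_one hs0]; linarith
  set γ := Measure.pi fun _ : Fin N => gaussianReal 0 1 with hγ
  set A := (fun (g : Fin N → ℝ) i => Real.sqrt N * g i / Real.sqrt (∑ j, (g j) ^ 2)) ⁻¹'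
    band N m (q - a) with hA
  have hAm : MeasurableSet A := measurable_sphere_projection N (measurableSet_band N m _)
  -- The quadratic weight is written as a Gaussian mixture of exponentials of linear forms.
  set F : (Fin N → ℝ) → ℝ → ℝ≥0∞ := fun g θ =>
    ∏ i, ENNReal.ofReal (Real.exp (τ * θ * m i / √N * g i - τ ^ 2 * a ^ 2 / 2 * g i ^ 2)) with hF
  have hFg : ∀ g, ∫⁻ θ, F g θ ∂gaussianReal 0 1 = ENNReal.ofReal
      (Real.exp ((τ * ((∑ i, g i * m i) / √N)) ^ 2 / 2 - τ ^ 2 * a ^ 2 / 2 * ∑ i, g i ^ 2)) := by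
    intro g
    have : ∀ θ, F g θ = ENNReal.ofReal (Real.exp (-(τ ^ 2 * a ^ 2 / 2 * ∑ i, g i ^ 2))) *
        ENNReal.ofReal (Real.exp (τ * ((∑ i, g i * m i) / √N) * θ - 0 * θ ^ 2)) := by
      intro θ
      rw [hF, ← ENNReal.ofReal_mul (by positivity), ← Real.exp_add]
      simp only
      rw [← ENNReal.ofReal_prod_of_nonneg fun i _ => by positivity, ← Real.exp_sum,
        Finset.sum_sub_distrib, Finset.mul_sum, Finset.sum_div, Finset.mul_sum, Finset.sum_mul]
      congr 2
      rw [zero_mul, sub_zero, neg_add_eq_sub]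
      congr 1
      exact Finset.sum_congr rfl fun i _ => by ring
    simp_rw [this]
    rw [lintegral_const_mul _ (by fun_prop),
      lintegral_exp_linear_sub_sq_gaussianReal _ 0 (by norm_num),
      ← ENNReal.ofReal_mul (by positivity)]
    simp only [mul_zero, add_zero, Real.sqrt_one, div_one, mul_one]
    rw [← Real.exp_add, neg_add_eq_sub]
  have hFθ : ∀ θ, ∫⁻ g, F g θ ∂γ = ENNReal.ofReal ((√s)⁻¹ ^ N) *
      ENNReal.ofReal (Real.exp (0 * θ - (-(β / 2)) * θ ^ 2)) := by
    intro θ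
    rw [hF, hγ, lintegral_pi_prod_eq_prod (fun _ : Fin N => gaussianReal 0 1) (fun i x =>
      ENNReal.ofReal (Real.exp (τ * θ * m i / √N * x - τ ^ 2 * a ^ 2 / 2 * x ^ 2)))
      fun i => by fun_prop]
    have h1 : 1 + 2 * (τ ^ 2 * a ^ 2 / 2) = s := by rw [hs]; ring
    simp_rw [lintegral_exp_linear_sub_sq_gaussianReal _ (τ ^ 2 * a ^ 2 / 2) (h1 ▸ hs0), h1]
    rw [← ENNReal.ofReal_prod_of_nonneg fun i _ => by positivity,
      ← ENNReal.ofReal_mul (by positivity)]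
    congr 1
    simp_rw [div_eq_mul_inv _ (√s)]
    rw [Finset.prod_mul_distrib, Finset.prod_const, Finset.card_univ, Fintype.card_fin,
      ← Real.exp_sum, mul_comm]
    congr 2
    simp_rw [div_pow, mul_pow, Real.sq_sqrt hN0.le]
    rw [← Finset.sum_div, ← Finset.sum_div, ← Finset.mul_sum, hm, hβ]
    field_simp
    ring
  have hle : ∀ g ∈ A, 1 ≤ ∫⁻ θ, F g θ ∂gaussianReal 0 1 := by
    intro g hg
    have hg2 : |dotp ((fun i => Real.sqrt N * g i / Real.sqrt (∑ j, (g j) ^ 2)) - m) m| <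
      N * (q - a) := hg.2
    rw [dotp_sphere_projection_sub, hm] at hg2
    rw [hFg, ENNReal.one_le_ofReal, Real.one_le_exp_iff, sub_nonneg]
    have h1 := (abs_lt.1 hg2).1
    have h2 : N * a ≤ √N * (∑ i, g i * m i) / √(∑ j, g j ^ 2) := by linarith
    set S := ∑ j, g j ^ 2 with hS
    have hS0 : 0 ≤ S := Finset.sum_nonneg fun i _ => sq_nonneg (g i)
    have h3 : N * a ^ 2 * S ≤ (∑ i, g i * m i) ^ 2 := by
      rcases hS0.eq_or_lt with h0 | h0
      · rw [← h0, mul_zero]; positivity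
      · have h4 := pow_le_pow_left₀ (by positivity) h2 2
        rw [div_pow, mul_pow, mul_pow, Real.sq_sqrt hN0.le, Real.sq_sqrt hS0,
          le_div_iff₀ h0] at h4
        refine le_of_mul_le_mul_left ?_ hN0
        linarith
    rw [mul_pow, div_pow, Real.sq_sqrt hN0.le]
    have h4 : a ^ 2 * S ≤ (∑ i, g i * m i) ^ 2 / N := by
      rw [le_div_iff₀ hN0]; linarith
    nlinarith [mul_le_mul_of_nonneg_left h4 (sq_nonneg τ)]
  have hFm : Measurable (Function.uncurry F) := by
    refine Finset.measurable_prod _ fun i _ => ?_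
    fun_prop
  calc sphereUniform N (band N m (q - a)) = ∫⁻ g in A, 1 ∂γ := by
        rw [sphereUniform_band, setLIntegral_one]
    _ ≤ ∫⁻ g in A, ∫⁻ θ, F g θ ∂gaussianReal 0 1 ∂γ := setLIntegral_mono' hAm hle
    _ ≤ ∫⁻ g, ∫⁻ θ, F g θ ∂gaussianReal 0 1 ∂γ := setLIntegral_le_lintegral _ _
    _ = ∫⁻ θ, ∫⁻ g, F g θ ∂γ ∂gaussianReal 0 1 := lintegral_lintegral_swap hFm.aemeasurable
    _ = _ := by
      simp_rw [hFθ]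
      rw [lintegral_const_mul _ (by fun_prop),
        lintegral_exp_linear_sub_sq_gaussianReal _ _ (by linarith),
        ← ENNReal.ofReal_mul (by positivity)]
      congr 1
      have : 1 + 2 * (-(β / 2)) = 1 - β := by ring
      rw [this]
      simp [div_eq_mul_inv]

/-- The exponential rate of the upper bound on the volume of a band of width `δ`. -/
def bandRate (q δ : ℝ) : ℝ :=
  -(Real.log (1 + (1 - δ) / (q - (q - δ) ^ 2) * (q - δ) ^ 2) / 2)

theorem tendsto_bandRate {q : ℝ} (hq0 : 0 < q) (hq1 : q < 1) :
    Tendsto (bandRate q) (nhdsWithin 0 (Set.Ioi 0)) (nhds (Real.log (1 - q) / 2)) := by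
  have hd : q - q ^ 2 ≠ 0 := by nlinarith
  have hval : 1 + 1 / (q - q ^ 2) * q ^ 2 = (1 - q)⁻¹ := by
    have : 1 - q ≠ 0 := by linarith
    rw [show q - q ^ 2 = q * (1 - q) by ring]
    field_simp
    ring
  have hcont : ContinuousAt (bandRate q) 0 := by
    unfold bandRate
    refine ((ContinuousAt.log ?_ ?_).div_const 2).neg
    · exact continuousAt_const.add (((by fun_prop : ContinuousAt (fun δ : ℝ => 1 - δ) 0).div
        (by fun_prop) (by simpa using hd)).mul (by fun_prop))
    · simp only [sub_zero]
      rw [hval]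
      exact inv_ne_zero (by linarith)
  have h0 : bandRate q 0 = Real.log (1 - q) / 2 := by
    simp only [bandRate, sub_zero]
    rw [hval, Real.log_inv]
    ring
  exact h0 ▸ hcont.tendsto.mono_left nhdsWithin_le_nhds

theorem isProbabilityMeasure_sphereUniform (N : ℕ) : IsProbabilityMeasure (sphereUniform N) :=
  Measure.isProbabilityMeasure_map (measurable_sphere_projection N).aemeasurable

theorem log_sphereUniform_div_nonpos (N : ℕ) (s : Set (Fin N → ℝ)) :
    Real.log ((sphereUniform N s).toReal) / N ≤ 0 := by
  have := isProbabilityMeasure_sphereUniform N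
  exact div_nonpos_of_nonpos_of_nonneg
    (Real.log_nonpos ENNReal.toReal_nonneg measureReal_le_one) (Nat.cast_nonneg N)

/-- Logarithmic form of the lower bound. -/
theorem eventually_le_log_sphereUniform_band (q : ℝ) (hq : q ∈ Set.Ico (0 : ℝ) 1)
    (m : (N : ℕ) → Fin N → ℝ) (hm : ∀ N, 1 ≤ N → ∑ i, (m N i) ^ 2 = N * q)
    {δ ε : ℝ} (hδ : 0 < δ) (hε : 0 < ε) :
    ∀ᶠ N : ℕ in atTop, 0 < (sphereUniform N (band N (m N) δ)).toReal ∧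
      Real.log (1 - q) / 2 - ε ≤ Real.log ((sphereUniform N (band N (m N) δ)).toReal) / N := by
  filter_upwards [eventually_exp_le_sphereUniform_band q hq m hm hδ hε,
    eventually_ge_atTop 1] with N h hN1
  have hN0 : (0 : ℝ) < N := by exact_mod_cast hN1
  have := isProbabilityMeasure_sphereUniform N
  have h' := (ENNReal.ofReal_le_iff_le_toReal (measure_ne_top _ _)).1 h
  have hpos := (Real.exp_pos _).trans_le h'
  refine ⟨hpos, ?_⟩
  rw [le_div_iff₀ hN0, mul_comm]
  exact (Real.le_log_iff_exp_le hpos).2 h'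

/-- Logarithmic form of the upper bound. -/
theorem eventually_log_sphereUniform_band_le (q : ℝ) (hq : q ∈ Set.Ico (0 : ℝ) 1)
    (m : (N : ℕ) → Fin N → ℝ) (hm : ∀ N, 1 ≤ N → ∑ i, (m N i) ^ 2 = N * q)
    {δ ε : ℝ} (hδ : 0 < δ) (hδq : δ < q) (hε : 0 < ε) :
    ∀ᶠ N : ℕ in atTop,
      Real.log ((sphereUniform N (band N (m N) δ)).toReal) / N ≤ bandRate q δ + ε := by
  have hq1 := hq.2
  have hgap : 0 < q - (q - δ) ^ 2 := by nlinarith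
  have hfrac : 0 ≤ (1 - δ) / (q - (q - δ) ^ 2) := div_nonneg (by linarith) hgap.le
  set τ := √((1 - δ) / (q - (q - δ) ^ 2)) with hτdef
  have hτ2 : τ ^ 2 = (1 - δ) / (q - (q - δ) ^ 2) := Real.sq_sqrt hfrac
  have hτ : τ ^ 2 * (q - (q - δ) ^ 2) < 1 := by
    rw [hτ2, div_mul_cancel₀ _ hgap.ne']; linarith
  set s := 1 + τ ^ 2 * (q - δ) ^ 2 with hs
  have hs0 : 0 < s := by positivity
  set K := √(1 - τ ^ 2 * q / s) with hK
  have hK0 : 0 < K := by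
    refine Real.sqrt_pos.2 (sub_pos.2 ?_)
    rw [div_lt_one hs0]; linarith
  have hrate : bandRate q δ = -(Real.log s / 2) := by rw [bandRate, hs, hτ2]
  have hlim : Tendsto (fun N : ℕ => -Real.log K / (N : ℝ)) atTop (nhds 0) :=
    tendsto_const_div_atTop_nhds_zero_nat _
  filter_upwards [hlim.eventually (gt_mem_nhds hε), eventually_ge_atTop 1,
    eventually_le_log_sphereUniform_band q hq m hm hδ hε] with N hN hN1 hpos
  have hN0 : (0 : ℝ) < N := by exact_mod_cast hN1
  have hle := sphereUniform_band_le hN1 (by linarith : 0 ≤ q - δ) hτ (m N) (hm N hN1)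
  rw [sub_sub_cancel, ← hs, ← hK] at hle
  have hle' := ENNReal.toReal_le_of_le_ofReal (by positivity) hle
  have hlog := Real.log_le_log hpos.1 hle'
  rw [Real.log_div (by positivity) hK0.ne', Real.log_pow, Real.log_inv,
    Real.log_sqrt hs0.le] at hlog
  rw [div_lt_iff₀ hN0] at hN
  rw [div_le_iff₀ hN0, hrate]
  linarith

/-- the exponential volume of a band of radius `√(Nq)` is `½ log(1-q)`. -/
theorem statement_14 (q : ℝ) (hq : q ∈ Set.Ico (0 : ℝ) 1)
    (m : (N : ℕ) → Fin N → ℝ) (hm : ∀ N, 1 ≤ N → ∑ i, (m N i) ^ 2 = N * q) :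
    Tendsto (fun δ : ℝ => Filter.limsup (fun N : ℕ =>
        Real.log ((sphereUniform N (band N (m N) δ)).toReal) / N) atTop)
      (nhdsWithin 0 (Set.Ioi 0)) (nhds (Real.log (1 - q) / 2))
    ∧ Tendsto (fun δ : ℝ => Filter.liminf (fun N : ℕ =>
        Real.log ((sphereUniform N (band N (m N) δ)).toReal) / N) atTop)
      (nhdsWithin 0 (Set.Ioi 0)) (nhds (Real.log (1 - q) / 2)) := by
  set u : ℝ → ℕ → ℝ := fun δ N =>
    Real.log ((sphereUniform N (band N (m N) δ)).toReal) / N with hu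
  have habove : ∀ δ, IsBoundedUnder (· ≤ ·) atTop (u δ) := fun δ =>
    isBoundedUnder_of ⟨0, fun N => log_sphereUniform_div_nonpos N _⟩
  have hbelow : ∀ δ, 0 < δ → IsBoundedUnder (· ≥ ·) atTop (u δ) := fun δ hδ =>
    isBoundedUnder_of_eventually_ge
      ((eventually_le_log_sphereUniform_band q hq m hm hδ one_pos).mono fun _ h => h.2)
  have hlow : ∀ δ, 0 < δ → Real.log (1 - q) / 2 ≤ liminf (u δ) atTop := fun δ hδ =>
    le_of_forall_sub_le fun ε hε => le_liminf_of_le (habove δ).isCoboundedUnder_ge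
      ((eventually_le_log_sphereUniform_band q hq m hm hδ hε).mono fun _ h => h.2)
  have hmid : ∀ δ, 0 < δ → liminf (u δ) atTop ≤ limsup (u δ) atTop := fun δ hδ =>
    liminf_le_limsup (habove δ) (hbelow δ hδ)
  obtain ⟨f, hf, hup⟩ : ∃ f : ℝ → ℝ,
      Tendsto f (nhdsWithin 0 (Set.Ioi 0)) (nhds (Real.log (1 - q) / 2)) ∧
      ∀ᶠ δ in nhdsWithin 0 (Set.Ioi 0), limsup (u δ) atTop ≤ f δ := by
    rcases hq.1.eq_or_lt with h0 | h0
    · refine ⟨fun _ => 0, by simp [← h0], ?_⟩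
      filter_upwards [self_mem_nhdsWithin] with δ hδ
      exact limsup_le_of_le (hbelow δ hδ).isCoboundedUnder_le
        (Eventually.of_forall fun N => log_sphereUniform_div_nonpos N _)
    · refine ⟨bandRate q, tendsto_bandRate h0 hq.2, ?_⟩
      filter_upwards [Ioo_mem_nhdsGT h0] with δ hδ
      exact le_of_forall_pos_le_add fun ε hε =>
        limsup_le_of_le (hbelow δ hδ.1).isCoboundedUnder_le
          (eventually_log_sphereUniform_band_le q hq m hm hδ.1 hδ.2 hε)
  have hpos : ∀ᶠ δ : ℝ in nhdsWithin 0 (Set.Ioi 0), 0 < δ := self_mem_nhdsWithin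
  exact ⟨tendsto_of_tendsto_of_tendsto_of_le_of_le' tendsto_const_nhds hf
      (hpos.mono fun δ hδ => (hlow δ hδ).trans (hmid δ hδ)) hup,
    tendsto_of_tendsto_of_tendsto_of_le_of_le' tendsto_const_nhds hf (hpos.mono hlow)
      ((hpos.and hup).mono fun δ hδ => (hmid δ hδ.1).trans hδ.2)⟩
end
end
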